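/- Let n ≥ 2 and let Γ ⊆ ℝⁿ be a convex invariant cone, and let f be a concave elliptic Hessian operator on Γ satisfying condition N with constants N₁, N₂ > 0. Let Ω ⊂ ℝⁿ be a bounded domain and let u be a smooth admissible function on Ω, continuous up to the boundary, solving F(D²u) = 1 in Ω with u = 0 on ∂Ω. Assume the interior gradient bound sup_Ω ( (−u)^α |Du| ) ≤ K holds for some constants α > 0 and K > 0. Then there exist constants β > 0 and C > 0, depending only on ‖u‖_{C⁰(Ω)}, K, α, N₁, N₂ and diam(Ω), such that sup_Ω ( (−u)^β |D²u| ) ≤ C. (In particular, no condition D on u is needed for this Hessian estimate.) -/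

import Mathlib

open scoped BigOperators

noncomputable section

/-- The positive orthant `Γₙ = (0,∞)ⁿ` in `ℝⁿ`. -/
def PosOrthant (n : ℕ) : Set (Fin n → ℝ) := {lam | ∀ i, 0 < lam i}

/-- A convex invariant cone: an open cone `Γ ⊆ ℝⁿ` with vertex at the origin, `Γ ≠ ℝⁿ`,
which is convex, satisfies `Γ + Γₙ ⊆ Γ`, and is invariant under permutations of coordinates. -/
def IsConvexInvariantCone {n : ℕ} (Γ : Set (Fin n → ℝ)) : Prop :=
  IsOpen Γ ∧ Γ ≠ Set.univ ∧ Convex ℝ Γ ∧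
    (∀ lam ∈ Γ, ∀ t : ℝ, 0 < t → t • lam ∈ Γ) ∧
    (∀ lam ∈ Γ, ∀ tau ∈ PosOrthant n, lam + tau ∈ Γ) ∧
    (∀ lam ∈ Γ, ∀ σ : Equiv.Perm (Fin n), lam ∘ σ ∈ Γ)

/-- The partial derivative `∂f/∂λᵢ(λ)`. -/
def fpd {n : ℕ} (f : (Fin n → ℝ) → ℝ) (i : Fin n) (lam : Fin n → ℝ) : ℝ :=
  fderiv ℝ f lam (Pi.single i 1)

/-- A concave elliptic Hessian operator on a convex invariant cone `Γ`:
a `C²`, permutation-invariant, concave function `f` on `Γ` which is elliptic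
(`∂f/∂λᵢ > 0`), positive, and positively homogeneous of degree one. -/
def IsConcaveEllipticHessianOp {n : ℕ} (Γ : Set (Fin n → ℝ)) (f : (Fin n → ℝ) → ℝ) : Prop :=
  ContDiffOn ℝ 2 f Γ ∧ ConcaveOn ℝ Γ f ∧
    (∀ lam ∈ Γ, ∀ σ : Equiv.Perm (Fin n), f (lam ∘ σ) = f lam) ∧
    (∀ lam ∈ Γ, ∀ i, 0 < fpd f i lam) ∧
    (∀ lam ∈ Γ, 0 < f lam) ∧
    (∀ lam ∈ Γ, ∀ t : ℝ, 0 < t → f (t • lam) = t * f lam)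

/-- Condition N: whenever `λ ∈ Γ` satisfies `f(λ) = 1` and `Σᵢ ∂f/∂λᵢ(λ) ≤ C` for some `C > 0`,
then `∂f/∂λᵢ(λ) ≥ 1/(N₁ C^{N₂})` for every `i`. -/
def ConditionN {n : ℕ} (Γ : Set (Fin n → ℝ)) (f : (Fin n → ℝ) → ℝ) (N₁ N₂ : ℝ) : Prop :=
  ∀ lam ∈ Γ, f lam = 1 → ∀ C : ℝ, 0 < C → (∑ i, fpd f i lam) ≤ C →
    ∀ i, 1 / (N₁ * C ^ N₂) ≤ fpd f i lam

/-- The Hessian matrix `D²u(x)`. -/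
def hessianMatrix {n : ℕ} (u : EuclideanSpace ℝ (Fin n) → ℝ) (x : EuclideanSpace ℝ (Fin n)) :
    Matrix (Fin n) (Fin n) ℝ :=
  fun i j => iteratedFDeriv ℝ 2 u x ![EuclideanSpace.single i 1, EuclideanSpace.single j 1]

/-- The vector of eigenvalues `λ(D²u(x))` of the Hessian of `u` at `x`
(junk value `0` if the Hessian matrix fails to be symmetric). -/
def hessEigen {n : ℕ} (u : EuclideanSpace ℝ (Fin n) → ℝ) (x : EuclideanSpace ℝ (Fin n)) :
    Fin n → ℝ :=
  if h : (hessianMatrix u x).IsHermitian then h.eigenvalues else 0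

/-- Condition D for a solution `u` of `F(D²u) = 1` on a set `Ω`: at every point, if an
eigenvalue `λᵢ` of `D²u` exceeds `D₁` then `∂f/∂λᵢ(λ) ⬝ λᵢ ≤ D₂`. -/
def ConditionD {n : ℕ} (f : (Fin n → ℝ) → ℝ) (u : EuclideanSpace ℝ (Fin n) → ℝ)
    (Ω : Set (EuclideanSpace ℝ (Fin n))) (D₁ D₂ : ℝ) : Prop :=
  ∀ x ∈ Ω, ∀ i, D₁ < hessEigen u x i →
    fpd f i (hessEigen u x) * hessEigen u x i ≤ D₂

/-- The `k`-th elementary symmetric polynomial `σ_k` on `ℝⁿ`. -/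
def esymmF (n k : ℕ) (lam : Fin n → ℝ) : ℝ :=
  ∑ s ∈ (Finset.univ : Finset (Fin n)).powersetCard k, ∏ i ∈ s, lam i

/-- The Gårding cone `Γ_k = {λ : σ_j(λ) > 0, j = 1,…,k}`. -/
def GammaK (n k : ℕ) : Set (Fin n → ℝ) :=
  {lam | ∀ j : ℕ, 1 ≤ j → j ≤ k → 0 < esymmF n j lam}

/-- The cone `Γ̂_p` of vectors all of whose sums of `p` distinct coordinates are positive. -/
def GammaHat (n p : ℕ) : Set (Fin n → ℝ) :=
  {lam | ∀ s : Finset (Fin n), s.card = p → 0 < ∑ i ∈ s, lam i}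

/-- The `p`-Monge–Ampère operator `M_p(λ) = ∏_{i₁<⋯<i_p} (λ_{i₁} + ⋯ + λ_{i_p})`. -/
def pMA (n p : ℕ) (lam : Fin n → ℝ) : ℝ :=
  ∏ s ∈ (Finset.univ : Finset (Fin n)).powersetCard p, ∑ i ∈ s, lam i

/-- Quadratic growth: `u(x) ≥ C⁻¹|x|² − C` for some `C > 0`. -/
def QuadraticGrowth {n : ℕ} (u : EuclideanSpace ℝ (Fin n) → ℝ) : Prop :=
  ∃ C : ℝ, 0 < C ∧ ∀ x, C⁻¹ * ‖x‖ ^ 2 - C ≤ u x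

/-- `u` is a quadratic polynomial: `u(x) = ½ xᵀAx + b·x + c` with `A` symmetric. -/
def IsQuadraticPolynomial {n : ℕ} (u : EuclideanSpace ℝ (Fin n) → ℝ) : Prop :=
  ∃ (A : Matrix (Fin n) (Fin n) ℝ) (b : Fin n → ℝ) (c : ℝ), A.IsSymm ∧
    ∀ x, u x = (1 / 2) * (∑ i, ∑ j, A i j * x i * x j) + (∑ i, b i * x i) + c

/-!
Pogorelov's test function `(-u - δ)^β D²u(e,e) exp (ε (-u - δ)^m |∇u|² + B/2 |y - y₀|²)` attains its
maximum at an interior point `x` and a top eigenvector `b₁` of `D²u(x)`. The equation enters through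
a minimality property rather than through second derivatives of `f`: with weights
`gᵢ = ∂f/∂λᵢ(λ(D²u(x)))`, the frame trace `Σ gᵢ D²u(y)(eᵢ,eᵢ)` is minimal, over all points `y` and
all orthonormal frames `e`, at `x` and an eigenframe, by concavity, homogeneity and the Schur-Horn
theorem. Moving the point with a fixed frame differentiates the equation; also rotating the frame
yields the positive third-order terms which, in the indices where `gᵢ` is large compared with `g₁`,
dominate the negative ones of the test function. What remains is
`ε/8 · w^(4a+2) λ₁² g₁ + Σ gᵢ ≤ C/w` with `w = -u(x) - δ`, so that condition N bounds `g₁` from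
below by a power of `w`, and hence `w^β λ₁` is bounded.
-/

open Filter Set Topology
open scoped Matrix

section TwoJet

variable {E F G : Type*} [NormedAddCommGroup E] [NormedAddCommGroup F] [NormedAddCommGroup G]
  [NormedSpace ℝ E] [NormedSpace ℝ F] [NormedSpace ℝ G]

/-- `HasTwoJetAt φ φ₁ φ₂ t` says that the curve `φ` is differentiable near `t`, with first
derivative `φ₁` and second derivative `φ₂` at `t`. Second-order conditions at an extremum are
computed by propagating these pairs through sums, products and compositions. -/
def HasTwoJetAt (φ : ℝ → F) (φ₁ φ₂ : F) (t : ℝ) : Prop :=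
  ∃ φ' : ℝ → F, (∀ᶠ s in 𝓝 t, HasDerivAt φ (φ' s) s) ∧ φ' t = φ₁ ∧ HasDerivAt φ' φ₂ t

namespace HasTwoJetAt

variable {φ ψ : ℝ → F} {φ₁ φ₂ ψ₁ ψ₂ : F} {f g : ℝ → ℝ} {f₁ f₂ g₁ g₂ t : ℝ}

theorem hasDerivAt (h : HasTwoJetAt φ φ₁ φ₂ t) : HasDerivAt φ φ₁ t := by
  obtain ⟨φ', hφ, rfl, -⟩ := h
  exact hφ.self_of_nhds

theorem const (c : F) : HasTwoJetAt (fun _ => c) 0 0 t :=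
  ⟨fun _ => 0, .of_forall fun s => hasDerivAt_const s c, rfl, hasDerivAt_const t 0⟩

theorem add (hφ : HasTwoJetAt φ φ₁ φ₂ t) (hψ : HasTwoJetAt ψ ψ₁ ψ₂ t) :
    HasTwoJetAt (fun s => φ s + ψ s) (φ₁ + ψ₁) (φ₂ + ψ₂) t := by
  obtain ⟨φ', hφ, rfl, hφ'⟩ := hφ
  obtain ⟨ψ', hψ, rfl, hψ'⟩ := hψ
  exact ⟨_, hφ.mp (hψ.mono fun s hψ hφ => hφ.fun_add hψ), rfl, hφ'.fun_add hψ'⟩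

theorem clm_comp (L : F →L[ℝ] G) (hφ : HasTwoJetAt φ φ₁ φ₂ t) :
    HasTwoJetAt (fun s => L (φ s)) (L φ₁) (L φ₂) t := by
  obtain ⟨φ', hφ, rfl, hφ'⟩ := hφ
  exact ⟨fun s => L (φ' s), hφ.mono fun s hφ => L.hasFDerivAt.comp_hasDerivAt s hφ, rfl,
    L.hasFDerivAt.comp_hasDerivAt t hφ'⟩

theorem neg (hφ : HasTwoJetAt φ φ₁ φ₂ t) : HasTwoJetAt (fun s => -φ s) (-φ₁) (-φ₂) t :=
  hφ.clm_comp (-ContinuousLinearMap.id ℝ F)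

theorem sub_const (hφ : HasTwoJetAt φ φ₁ φ₂ t) (c : F) :
    HasTwoJetAt (fun s => φ s - c) φ₁ φ₂ t := by
  simpa [sub_eq_add_neg] using hφ.add (const (-c))

theorem const_mul (hf : HasTwoJetAt f f₁ f₂ t) (c : ℝ) :
    HasTwoJetAt (fun s => c * f s) (c * f₁) (c * f₂) t :=
  hf.clm_comp (c • ContinuousLinearMap.id ℝ ℝ)

theorem sum {ι : Type*} {I : Finset ι} {φ : ι → ℝ → F} {φ₁ φ₂ : ι → F}
    (h : ∀ i ∈ I, HasTwoJetAt (φ i) (φ₁ i) (φ₂ i) t) :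
    HasTwoJetAt (fun s => ∑ i ∈ I, φ i s) (∑ i ∈ I, φ₁ i) (∑ i ∈ I, φ₂ i) t := by
  classical
  induction I using Finset.induction_on with
  | empty => simpa using const (0 : F)
  | insert i I hi ih =>
    simp only [Finset.sum_insert hi]
    exact (h i (I.mem_insert_self i)).add (ih fun j hj => h j (Finset.mem_insert_of_mem hj))

theorem clm_apply {A : ℝ → F →L[ℝ] G} {A₁ A₂ : F →L[ℝ] G} (hA : HasTwoJetAt A A₁ A₂ t)
    (hφ : HasTwoJetAt φ φ₁ φ₂ t) :
    HasTwoJetAt (fun s => A s (φ s)) (A₁ (φ t) + A t φ₁)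
      (A₂ (φ t) + (2 : ℝ) • A₁ φ₁ + A t φ₂) t := by
  obtain ⟨A', hA, rfl, hA'⟩ := hA
  obtain ⟨φ', hφ, rfl, hφ'⟩ := hφ
  refine ⟨fun s => A' s (φ s) + A s (φ' s), hA.mp (hφ.mono fun s hφ hA => hA.clm_apply hφ), rfl,
    ((hA'.clm_apply hφ.self_of_nhds).fun_add (hA.self_of_nhds.clm_apply hφ')).congr_deriv ?_⟩
  rw [two_smul]
  abel

theorem mul (hf : HasTwoJetAt f f₁ f₂ t) (hg : HasTwoJetAt g g₁ g₂ t) :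
    HasTwoJetAt (fun s => f s * g s) (f₁ * g t + f t * g₁)
      (f₂ * g t + 2 * f₁ * g₁ + f t * g₂) t := by
  obtain ⟨f', hf, rfl, hf'⟩ := hf
  obtain ⟨g', hg, rfl, hg'⟩ := hg
  refine ⟨fun s => f' s * g s + f s * g' s, hf.mp (hg.mono fun s hg hf => hf.fun_mul hg), rfl, ?_⟩
  exact ((hf'.fun_mul hg.self_of_nhds).fun_add (hf.self_of_nhds.fun_mul hg')).congr_deriv (by ring)

theorem log (hf : HasTwoJetAt f f₁ f₂ t) (hne : f t ≠ 0) :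
    HasTwoJetAt (fun s => Real.log (f s)) (f₁ / f t) (f₂ / f t - (f₁ / f t) ^ 2) t := by
  have hne_near : ∀ᶠ s in 𝓝 t, f s ≠ 0 := hf.hasDerivAt.continuousAt.eventually_ne hne
  obtain ⟨f', hf, rfl, hf'⟩ := hf
  refine ⟨fun s => f' s / f s, hf.mp (hne_near.mono fun s hs hf => hf.log hs), rfl, ?_⟩
  exact (hf'.fun_div hf.self_of_nhds hne).congr_deriv (by field_simp)

theorem pow (hf : HasTwoJetAt f f₁ f₂ t) (m : ℕ) :
    HasTwoJetAt (fun s => f s ^ m) (m * f t ^ (m - 1) * f₁)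
      (m * (m - 1 : ℕ) * f t ^ (m - 2) * f₁ ^ 2 + m * f t ^ (m - 1) * f₂) t := by
  obtain ⟨f', hf, rfl, hf'⟩ := hf
  refine ⟨fun s => m * f s ^ (m - 1) * f' s, hf.mono fun s hf => hf.fun_pow m, rfl, ?_⟩
  refine (((hf.self_of_nhds.fun_pow (m - 1)).const_mul (m : ℝ)).fun_mul hf').congr_deriv ?_
  rw [Nat.sub_sub]
  ring

theorem norm_sq {V : Type*} [NormedAddCommGroup V] [InnerProductSpace ℝ V] {γ : ℝ → V}
    {γ₁ γ₂ : V} (hγ : HasTwoJetAt γ γ₁ γ₂ t) :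
    HasTwoJetAt (fun s => ‖γ s‖ ^ 2) (2 * inner ℝ (γ t) γ₁)
      (2 * ‖γ₁‖ ^ 2 + 2 * inner ℝ (γ t) γ₂) t := by
  obtain ⟨γ', hγ, rfl, hγ'⟩ := hγ
  refine ⟨fun s => 2 * inner ℝ (γ s) (γ' s), hγ.mono fun s hγ => hγ.norm_sq, rfl, ?_⟩
  refine ((hγ.self_of_nhds.inner ℝ hγ').const_mul 2).congr_deriv ?_
  rw [real_inner_self_eq_norm_sq]
  ring

end HasTwoJetAt

theorem hasDerivAt_line (x v : E) (t : ℝ) : HasDerivAt (fun s : ℝ => x + s • v) v t := by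
  simpa using ((hasDerivAt_id t).smul_const v).const_add x

theorem hasTwoJetAt_line (x v : E) (t : ℝ) : HasTwoJetAt (fun s : ℝ => x + s • v) v 0 t :=
  ⟨fun _ => v, .of_forall (hasDerivAt_line x v), rfl, hasDerivAt_const t v⟩

theorem tendsto_line (x v : E) : Tendsto (fun s : ℝ => x + s • v) (𝓝 0) (𝓝 x) := by
  simpa using (hasDerivAt_line x v 0).continuousAt.tendsto

theorem hasTwoJetAt_comp_line {f : E → F} {x : E} (hf : ContDiffAt ℝ 2 f x) (v : E) :
    HasTwoJetAt (fun s : ℝ => f (x + s • v)) (fderiv ℝ f x v) (fderiv ℝ (fderiv ℝ f) x v v) 0 := by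
  have hdiff : ∀ᶠ y in 𝓝 x, DifferentiableAt ℝ f y :=
    (hf.eventually (by simp)).mono fun y hy => hy.differentiableAt (by norm_num)
  have hdiff' : HasFDerivAt (fderiv ℝ f) (fderiv ℝ (fderiv ℝ f) x) (x + (0 : ℝ) • v) := by
    rw [zero_smul, add_zero]
    exact ((hf.fderiv_right (m := 1) (by norm_num)).differentiableAt (by norm_num)).hasFDerivAt
  refine ⟨fun s => fderiv ℝ f (x + s • v) v, ?_, by simp, ?_⟩
  · filter_upwards [(tendsto_line x v).eventually hdiff] with s hs
    exact hs.hasFDerivAt.comp_hasDerivAt s (hasDerivAt_line x v s)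
  · have hchain : HasDerivAt (fun s : ℝ => fderiv ℝ f (x + s • v)) (fderiv ℝ (fderiv ℝ f) x v) 0 :=
      hdiff'.comp_hasDerivAt 0 (hasDerivAt_line x v 0)
    simpa using hchain.clm_apply (hasDerivAt_const 0 v)

theorem HasTwoJetAt.of_isLocalMax {φ : ℝ → ℝ} {φ₁ φ₂ t : ℝ} (h : HasTwoJetAt φ φ₁ φ₂ t)
    (hmax : IsLocalMax φ t) : φ₁ = 0 ∧ φ₂ ≤ 0 := by
  have hφ₁ : φ₁ = 0 := hmax.hasDerivAt_eq_zero h.hasDerivAt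
  obtain ⟨φ', hφ, rfl, hφ'⟩ := h
  have hderiv : deriv φ =ᶠ[𝓝 t] φ' := hφ.mono fun s hs => hs.deriv
  have hderiv₂ : deriv (deriv φ) t = φ₂ := by rw [hderiv.deriv_eq, hφ'.deriv]
  refine ⟨hφ₁, le_of_not_gt fun hpos => ?_⟩
  have hmin : IsLocalMin φ t := isLocalMin_of_deriv_deriv_pos (hderiv₂ ▸ hpos)
    (by rw [hderiv.self_of_nhds, hφ₁]) hφ.self_of_nhds.continuousAt
  have hconst : φ =ᶠ[𝓝 t] fun _ => φ t := by
    filter_upwards [hmax, hmin] with s hle hge using le_antisymm hle hge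
  have hzero : deriv φ =ᶠ[𝓝 t] fun _ => 0 := by simpa using hconst.deriv
  rw [← hderiv₂, hzero.deriv_eq, deriv_const] at hpos
  exact hpos.false

theorem HasTwoJetAt.of_isLocalMin {φ : ℝ → ℝ} {φ₁ φ₂ t : ℝ} (h : HasTwoJetAt φ φ₁ φ₂ t)
    (hmin : IsLocalMin φ t) : φ₁ = 0 ∧ 0 ≤ φ₂ := by
  simpa using h.neg.of_isLocalMax hmin.neg

end TwoJet

section ConvexInvariantCone

variable {n : ℕ} {Γ : Set (Fin n → ℝ)}

theorem exists_mulVec_eq_sum_perm {P : Matrix (Fin n) (Fin n) ℝ}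
    (hP : P ∈ doublyStochastic ℝ (Fin n)) :
    ∃ w : Equiv.Perm (Fin n) → ℝ, (∀ σ, 0 ≤ w σ) ∧ ∑ σ, w σ = 1 ∧
      ∀ v : Fin n → ℝ, P.mulVec v = ∑ σ, w σ • (v ∘ σ) := by
  obtain ⟨w, hw_nonneg, hw_sum, rfl⟩ := exists_eq_sum_perm_of_mem_doublyStochastic hP
  refine ⟨w, hw_nonneg, hw_sum, fun v => ?_⟩
  simp only [Matrix.sum_mulVec, Matrix.smul_mulVec, Matrix.permMatrix_mulVec]

namespace IsConvexInvariantCone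

theorem mulVec_mem (hΓ : IsConvexInvariantCone Γ) {P : Matrix (Fin n) (Fin n) ℝ}
    (hP : P ∈ doublyStochastic ℝ (Fin n)) {lam : Fin n → ℝ} (hlam : lam ∈ Γ) :
    P.mulVec lam ∈ Γ := by
  obtain ⟨-, -, hconvex, -, -, hperm⟩ := hΓ
  obtain ⟨w, hw_nonneg, hw_sum, hw⟩ := exists_mulVec_eq_sum_perm hP
  rw [hw]
  exact hconvex.sum_mem (fun σ _ => hw_nonneg σ) hw_sum fun σ _ => hperm lam hlam σ

theorem const_notMem_of_neg (hΓ : IsConvexInvariantCone Γ) {c : ℝ} (hc : c < 0) :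
    (fun _ => c) ∉ Γ := by
  obtain ⟨-, hne, -, hsmul, hadd, -⟩ := hΓ
  intro hmem
  refine hne (eq_univ_of_forall fun v => ?_)
  have hscaled := hsmul _ hmem ((‖v‖ + 1) / -c) (div_pos (by positivity) (by linarith))
  convert hadd _ hscaled (fun i => v i + (‖v‖ + 1)) (fun i => ?_) using 1
  · ext i
    simp only [Pi.add_apply, Pi.smul_apply, smul_eq_mul]
    rw [div_neg, neg_mul, div_mul_cancel₀ _ hc.ne]
    ring
  · have := neg_le_of_abs_le (norm_le_pi_norm v i)
    linarith

theorem const_notMem_of_nonpos (hΓ : IsConvexInvariantCone Γ) {c : ℝ} (hc : c ≤ 0) :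
    (fun _ => c) ∉ Γ := by
  intro hmem
  have hcont : ContinuousAt (fun t : ℝ => (fun _ => c - t : Fin n → ℝ)) 0 :=
    Continuous.continuousAt (by fun_prop)
  have hnear : ∀ᶠ t : ℝ in 𝓝 0, (fun _ => c - t : Fin n → ℝ) ∈ Γ :=
    hcont.eventually (hΓ.1.mem_nhds (by simpa using hmem))
  obtain ⟨t, ht_mem, ht_pos⟩ :=
    ((hnear.filter_mono nhdsWithin_le_nhds).and (self_mem_nhdsWithin (s := Ioi 0))).exists
  exact hΓ.const_notMem_of_neg (sub_neg.2 (hc.trans_lt ht_pos)) ht_mem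

theorem sum_pos (hΓ : IsConvexInvariantCone Γ) {lam : Fin n → ℝ} (hlam : lam ∈ Γ) :
    0 < ∑ i, lam i := by
  have hP : (Matrix.of fun _ _ => (n : ℝ)⁻¹ : Matrix (Fin n) (Fin n) ℝ) ∈
      doublyStochastic ℝ (Fin n) := by
    rw [mem_doublyStochastic_iff_sum]
    refine ⟨fun _ _ => by simp, fun i => ?_, fun i => ?_⟩ <;>
    · have : (n : ℝ) ≠ 0 := Nat.cast_ne_zero.2 i.pos.ne'
      simp [this]
  have hmean : (fun _ => (n : ℝ)⁻¹ * ∑ i, lam i) ∈ Γ := by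
    convert hΓ.mulVec_mem hP hlam using 1
    ext
    simp [Matrix.mulVec, dotProduct, Finset.mul_sum]
  by_contra! hsum
  exact hΓ.const_notMem_of_nonpos (mul_nonpos_of_nonneg_of_nonpos (by positivity) hsum) hmean

end IsConvexInvariantCone

end ConvexInvariantCone

section HessianOperator

variable {n : ℕ} {Γ : Set (Fin n → ℝ)} {f : (Fin n → ℝ) → ℝ} {lam mu : Fin n → ℝ}

theorem sub_le_of_concaveOn_of_hasFDerivAt {E : Type*} [NormedAddCommGroup E] [NormedSpace ℝ E]
    {s : Set E} {φ : E → ℝ} {φ' : E →L[ℝ] ℝ} {x y : E} (hφ : ConcaveOn ℝ s φ) (hx : x ∈ s)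
    (hy : y ∈ s) (hφ' : HasFDerivAt φ φ' x) : φ y - φ x ≤ φ' (y - x) := by
  have hderiv : HasDerivAt (φ ∘ AffineMap.lineMap (k := ℝ) x y) (φ' (y - x)) 0 :=
    HasFDerivAt.comp_hasDerivAt 0 (by simpa using hφ') AffineMap.hasDerivAt_lineMap
  simpa [slope_def_field] using (hφ.comp_affineMap (AffineMap.lineMap x y)).slope_le_of_hasDerivAt
    (by simpa using hx) (by simpa using hy) one_pos hderiv

theorem fderiv_eq_sum_fpd (f : (Fin n → ℝ) → ℝ) (lam mu : Fin n → ℝ) :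
    fderiv ℝ f lam mu = ∑ i, fpd f i lam * mu i := by
  conv_lhs => rw [pi_eq_sum_univ' mu]
  simp only [map_sum, map_smul, smul_eq_mul, fpd, mul_comm]

namespace IsConcaveEllipticHessianOp

theorem differentiableAt (hf : IsConcaveEllipticHessianOp Γ f) (hΓ : IsOpen Γ) (hlam : lam ∈ Γ) :
    DifferentiableAt ℝ f lam :=
  (hf.1.contDiffAt (hΓ.mem_nhds hlam)).differentiableAt (by norm_num)

theorem sum_fpd_mul_self (hf : IsConcaveEllipticHessianOp Γ f) (hΓ : IsOpen Γ) (hlam : lam ∈ Γ) :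
    ∑ i, fpd f i lam * lam i = f lam := by
  rw [← fderiv_eq_sum_fpd]
  have hchain : HasDerivAt (fun t : ℝ => f (t • lam)) (fderiv ℝ f lam lam) 1 := by
    have hdiff : HasFDerivAt f (fderiv ℝ f lam) ((1 : ℝ) • lam) := by
      rw [one_smul]
      exact (hf.differentiableAt hΓ hlam).hasFDerivAt
    have hray : HasDerivAt (fun t : ℝ => t • lam) lam 1 := by
      simpa using (hasDerivAt_id (1 : ℝ)).smul_const lam
    exact hdiff.comp_hasDerivAt 1 hray
  have hhom : HasDerivAt (fun t : ℝ => f (t • lam)) (f lam) 1 := by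
    refine (by simpa using (hasDerivAt_id (1 : ℝ)).mul_const (f lam) :
      HasDerivAt (fun t : ℝ => t * f lam) (f lam) 1).congr_of_eventuallyEq ?_
    filter_upwards [lt_mem_nhds (zero_lt_one' ℝ)] with t ht
    exact hf.2.2.2.2.2 lam hlam t ht
  exact hchain.unique hhom

theorem le_sum_fpd_mul (hf : IsConcaveEllipticHessianOp Γ f) (hΓ : IsOpen Γ) (hlam : lam ∈ Γ)
    (hmu : mu ∈ Γ) : f mu ≤ ∑ i, fpd f i lam * mu i := by
  have htangent := sub_le_of_concaveOn_of_hasFDerivAt hf.2.1 hlam hmu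
    (hf.differentiableAt hΓ hlam).hasFDerivAt
  rw [map_sub, fderiv_eq_sum_fpd, fderiv_eq_sum_fpd, hf.sum_fpd_mul_self hΓ hlam] at htangent
  linarith

theorem le_sum_fpd_mul_mulVec (hf : IsConcaveEllipticHessianOp Γ f)
    (hΓ : IsConvexInvariantCone Γ) (hlam : lam ∈ Γ) (hmu : mu ∈ Γ)
    {P : Matrix (Fin n) (Fin n) ℝ} (hP : P ∈ doublyStochastic ℝ (Fin n)) :
    f mu ≤ ∑ i, fpd f i lam * P.mulVec mu i := by
  obtain ⟨w, hw_nonneg, hw_sum, hw⟩ := exists_mulVec_eq_sum_perm hP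
  obtain ⟨hopen, -, -, -, -, hperm⟩ := hΓ
  calc f mu = ∑ σ, w σ * f (mu ∘ σ) := by
        simp only [hf.2.2.1 mu hmu, ← Finset.sum_mul, hw_sum, one_mul]
    _ ≤ ∑ σ, w σ * ∑ i, fpd f i lam * mu (σ i) := by
        gcongr with σ
        · exact hw_nonneg σ
        · exact hf.le_sum_fpd_mul hopen hlam (hperm mu hmu σ)
    _ = ∑ i, fpd f i lam * P.mulVec mu i := by
        simp only [hw, Finset.sum_apply, Pi.smul_apply, smul_eq_mul, Function.comp_apply,
          Finset.mul_sum, mul_left_comm]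
        exact Finset.sum_comm

end IsConcaveEllipticHessianOp

end HessianOperator

local notation:max "D²" u:max => fderiv ℝ (fderiv ℝ u)
local notation:max "D³" u:max => fderiv ℝ (fderiv ℝ (fderiv ℝ u))
local notation:max "D⁴" u:max => fderiv ℝ (fderiv ℝ (fderiv ℝ (fderiv ℝ u)))

section Eigenframe

variable {ι E : Type*} [Fintype ι] [NormedAddCommGroup E] [InnerProductSpace ℝ E]
  {A : E →L[ℝ] E →L[ℝ] ℝ} {lam : ι → ℝ} {b : OrthonormalBasis ι ℝ E}

/-- The orthonormal basis `b` diagonalizes the bilinear form `A`, with eigenvalues `lam`. -/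
def IsEigenframe (A : E →L[ℝ] E →L[ℝ] ℝ) (lam : ι → ℝ) (b : OrthonormalBasis ι ℝ E) : Prop :=
  ∀ i v, A (b i) v = lam i * inner ℝ (b i) v

namespace IsEigenframe

theorem apply_self (hb : IsEigenframe A lam b) (i : ι) : A (b i) (b i) = lam i := by
  simp [hb i]

theorem apply_eq_sum (hb : IsEigenframe A lam b) (v w : E) :
    A v w = ∑ i, lam i * (inner ℝ (b i) v * inner ℝ (b i) w) := by
  conv_lhs => rw [← b.sum_repr' v]
  simp only [map_sum, map_smul, sum_apply, smul_apply, smul_eq_mul, hb _ w, mul_left_comm]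

theorem apply_le (hb : IsEigenframe A lam b) {C : ℝ} (hlam : ∀ i, lam i ≤ C) (v : E) :
    A v v ≤ C * ‖v‖ ^ 2 := by
  rw [hb.apply_eq_sum, ← b.sum_sq_norm_inner_right v, Finset.mul_sum]
  refine Finset.sum_le_sum fun i _ => ?_
  rw [← sq, Real.norm_eq_abs, sq_abs]
  exact mul_le_mul_of_nonneg_right (hlam i) (sq_nonneg _)

theorem opNorm_le (hb : IsEigenframe A lam b) {C : ℝ} (hC : 0 ≤ C) (hlam : ∀ i, |lam i| ≤ C) :
    ‖A‖ ≤ C := by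
  refine ContinuousLinearMap.opNorm_le_bound₂ _ hC fun v w => ?_
  calc ‖A v w‖ ≤ ∑ i, |lam i * (inner ℝ (b i) v * inner ℝ (b i) w)| := by
        rw [hb.apply_eq_sum]
        exact Finset.abs_sum_le_sum_abs _ _
    _ ≤ ∑ i, C * (‖inner ℝ (b i) v‖ * ‖inner ℝ (b i) w‖) := by
        gcongr with i
        rw [abs_mul, abs_mul]
        gcongr
        · exact hlam i
        · rfl
        · rfl
    _ ≤ C * (‖v‖ * ‖w‖) := by
        rw [← Finset.mul_sum]
        gcongr
        refine (Real.sum_mul_le_sqrt_mul_sqrt _ _ _).trans_eq ?_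
        rw [b.sum_sq_norm_inner_right, b.sum_sq_norm_inner_right, Real.sqrt_sq (norm_nonneg _),
          Real.sqrt_sq (norm_nonneg _)]
    _ = C * ‖v‖ * ‖w‖ := (mul_assoc ..).symm

theorem opNorm_le_card_mul (hb : IsEigenframe A lam b) {C : ℝ} (hC : 0 ≤ C)
    (hlam : ∀ i, lam i ≤ C) (hsum : 0 ≤ ∑ i, lam i) : ‖A‖ ≤ Fintype.card ι * C := by
  classical
  refine hb.opNorm_le (by positivity) fun i => abs_le.2 ⟨?_, ?_⟩
  · have hothers : ∑ j ∈ Finset.univ.erase i, lam j ≤ Fintype.card ι * C :=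
      calc ∑ j ∈ Finset.univ.erase i, lam j ≤ ∑ _j ∈ Finset.univ.erase i, C := by
            gcongr with j
            exact hlam j
        _ ≤ ∑ _j : ι, C := Finset.sum_le_univ_sum_of_nonneg fun _ => hC
        _ = Fintype.card ι * C := by simp
    linarith [Finset.add_sum_erase Finset.univ lam (Finset.mem_univ i)]
  · have hcard : (1 : ℝ) ≤ Fintype.card ι := by exact_mod_cast Fintype.card_pos_iff.2 ⟨i⟩
    exact (hlam i).trans (le_mul_of_one_le_left hC hcard)

end IsEigenframe

theorem sq_inner_mem_doublyStochastic [DecidableEq ι] (b e : OrthonormalBasis ι ℝ E) :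
    Matrix.of (fun i j => inner ℝ (b j) (e i) ^ 2) ∈ doublyStochastic ℝ ι := by
  rw [mem_doublyStochastic_iff_sum]
  refine ⟨fun i j => sq_nonneg _, fun i => ?_, fun j => ?_⟩
  · simpa using b.sum_sq_norm_inner_right (e i)
  · simpa using e.sum_sq_norm_inner_left (b j)

/-- The weighted sum of the diagonal entries of `A` in the frame `e`. -/
def weightedTrace (g : ι → ℝ) (A : E →L[ℝ] E →L[ℝ] ℝ) (e : OrthonormalBasis ι ℝ E) : ℝ :=
  ∑ i, g i * A (e i) (e i)

end Eigenframe

section HessianEigenframe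

variable {n : ℕ} {Γ : Set (Fin n → ℝ)} {f : (Fin n → ℝ) → ℝ} {lam mu : Fin n → ℝ}

theorem IsConcaveEllipticHessianOp.le_weightedTrace_fpd {E : Type*} [NormedAddCommGroup E]
    [InnerProductSpace ℝ E] {A : E →L[ℝ] E →L[ℝ] ℝ} {b : OrthonormalBasis (Fin n) ℝ E}
    (hf : IsConcaveEllipticHessianOp Γ f) (hΓ : IsConvexInvariantCone Γ) (hlam : lam ∈ Γ)
    (hmu : mu ∈ Γ) (hb : IsEigenframe A mu b) (e : OrthonormalBasis (Fin n) ℝ E) :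
    f mu ≤ weightedTrace (fun i => fpd f i lam) A e := by
  refine (hf.le_sum_fpd_mul_mulVec hΓ hlam hmu (sq_inner_mem_doublyStochastic b e)).trans_eq ?_
  refine Finset.sum_congr rfl fun i _ => ?_
  simp only [hb.apply_eq_sum, Matrix.mulVec, dotProduct, Matrix.of_apply, sq, mul_comm (mu _)]

variable {u : EuclideanSpace ℝ (Fin n) → ℝ} {x : EuclideanSpace ℝ (Fin n)}

theorem fderiv_fderiv_apply_eq_dotProduct (v w : EuclideanSpace ℝ (Fin n)) :
    D²u x v w = v ⬝ᵥ hessianMatrix u x *ᵥ w := by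
  have hrepr (v : EuclideanSpace ℝ (Fin n)) : v = ∑ i, v i • EuclideanSpace.single i (1 : ℝ) := by
    simpa using ((EuclideanSpace.basisFun (Fin n) ℝ).sum_repr v).symm
  conv_lhs => rw [hrepr v, hrepr w]
  simp only [map_sum, map_smul, sum_apply, smul_apply, smul_eq_mul, Matrix.mulVec, dotProduct,
    hessianMatrix, iteratedFDeriv_two_apply, Matrix.cons_val_zero, Matrix.cons_val_one,
    Finset.mul_sum]
  rw [Finset.sum_comm]
  simp only [mul_left_comm, mul_comm]

theorem isHermitian_hessianMatrix (hu : ContDiffAt ℝ 2 u x) : (hessianMatrix u x).IsHermitian := by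
  ext i j
  simpa [hessianMatrix, iteratedFDeriv_two_apply] using hu.isSymmSndFDerivAt (by simp) _ _

theorem exists_isEigenframe_hessEigen (hu : ContDiffAt ℝ 2 u x) :
    ∃ b : OrthonormalBasis (Fin n) ℝ (EuclideanSpace ℝ (Fin n)),
      IsEigenframe (D²u x) (hessEigen u x) b := by
  have hH := isHermitian_hessianMatrix hu
  refine ⟨hH.eigenvectorBasis, fun i v => ?_⟩
  rw [hu.isSymmSndFDerivAt (by simp) _ v, fderiv_fderiv_apply_eq_dotProduct,
    hH.mulVec_eigenvectorBasis, hessEigen, dif_pos hH]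
  simp [dotProduct, PiLp.inner_apply, Finset.mul_sum, mul_left_comm]

end HessianEigenframe

section HigherSymmetry

variable {E F : Type*} [NormedAddCommGroup E] [NormedSpace ℝ E] [NormedAddCommGroup F]
  [NormedSpace ℝ F] {u : E → F} {x : E}

theorem clm_fderiv_apply_eq_self {G : E → F} (hG : DifferentiableAt ℝ G x) {L : F →L[ℝ] F}
    (hL : ∀ᶠ y in 𝓝 x, L (G y) = G y) (v : E) : L (fderiv ℝ G x v) = fderiv ℝ G x v := by
  have hderiv : fderiv ℝ (L ∘ G) x = fderiv ℝ G x := EventuallyEq.fderiv_eq hL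
  rw [(L.hasFDerivAt.comp x hG.hasFDerivAt).fderiv] at hderiv
  exact DFunLike.congr_fun hderiv v

theorem D2_symm (hu : ContDiffAt ℝ 2 u x) (v w : E) : D²u x v w = D²u x w v :=
  hu.isSymmSndFDerivAt (by simp) v w

theorem D3_symm_left (hu : ContDiffAt ℝ 3 u x) (v w z : E) : D³u x v w z = D³u x w v z := by
  rw [D2_symm (hu.fderiv_right (by norm_num))]

theorem D3_symm_right (hu : ContDiffAt ℝ 3 u x) (v w z : E) : D³u x v w z = D³u x v z w := by
  have hD2 : DifferentiableAt ℝ (D²u) x :=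
    ((hu.fderiv_right (m := 2) (by norm_num)).fderiv_right (m := 1) (by norm_num)).differentiableAt
      (by norm_num)
  have hflip := clm_fderiv_apply_eq_self (F := E →L[ℝ] E →L[ℝ] F) hD2
    (L := (ContinuousLinearMap.flipₗᵢ ℝ E E F).toContinuousLinearEquiv.toContinuousLinearMap)
    ((hu.eventually (by simp)).mono fun y hy => by
      ext v w
      exact D2_symm (hy.of_le (by norm_num)) w v) v
  exact DFunLike.congr_fun (DFunLike.congr_fun hflip z) w

theorem D4_symm_middle (hu : ContDiffAt ℝ 4 u x) (v w z p : E) :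
    D⁴u x v w z p = D⁴u x v z w p := by
  rw [D3_symm_right (hu.fderiv_right (by norm_num))]

set_option maxSynthPendingDepth 5 in
theorem D4_symm_right (hu : ContDiffAt ℝ 4 u x) (v w z p : E) :
    D⁴u x v w z p = D⁴u x v w p z := by
  have hD3 : DifferentiableAt ℝ (D³u) x :=
    (((hu.fderiv_right (m := 3) (by norm_num)).fderiv_right (m := 2) (by norm_num)).fderiv_right
      (m := 1) (by norm_num)).differentiableAt (by norm_num)
  have hflip := clm_fderiv_apply_eq_self (F := E →L[ℝ] E →L[ℝ] E →L[ℝ] F) hD3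
    (L := ContinuousLinearMap.compL ℝ E _ _
    (ContinuousLinearMap.flipₗᵢ ℝ E E F).toContinuousLinearEquiv.toContinuousLinearMap)
    ((hu.eventually (by simp)).mono fun y hy => by
      ext w z p
      exact D3_symm_right (hy.of_le (by norm_num)) w p z) v
  exact DFunLike.congr_fun (DFunLike.congr_fun (DFunLike.congr_fun hflip w) p) z

theorem D4_symm_pairs (hu : ContDiffAt ℝ 4 u x) (v w : E) :
    D⁴u x v v w w = D⁴u x w w v v := by
  have hu' : ContDiffAt ℝ 3 (fderiv ℝ u) x := hu.fderiv_right (by norm_num)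
  rw [D4_symm_middle hu, D3_symm_left hu', D4_symm_right hu, D4_symm_middle hu]

end HigherSymmetry

section FrameVariation

variable {ι E : Type*} [Fintype ι] [NormedAddCommGroup E] [InnerProductSpace ℝ E]
  {g lam : ι → ℝ} {u : E → ℝ} {x : E} {b : OrthonormalBasis ι ℝ E}

theorem exists_orthonormalBasis_curve [CompleteSpace E] {S : E →L[ℝ] E}
    (hS : S ∈ skewAdjoint (E →L[ℝ] E)) (b : OrthonormalBasis ι ℝ E) :
    ∃ e : ℝ → OrthonormalBasis ι ℝ E, e 0 = b ∧
      ∀ i, HasTwoJetAt (fun t => e t i) (S (b i)) (S (S (b i))) 0 := by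
  have hunitary (t : ℝ) : NormedSpace.exp (t • S) ∈ unitary (E →L[ℝ] E) := by
    let _ : NormedAlgebra ℚ (E →L[ℝ] E) := NormedAlgebra.restrictScalars ℚ ℝ (E →L[ℝ] E)
    exact NormedSpace.exp_mem_unitary_of_mem_skewAdjoint (skewAdjoint.smul_mem t hS)
  have hderiv (v : E) (t : ℝ) : HasDerivAt (fun s : ℝ => NormedSpace.exp (s • S) v)
      (S (NormedSpace.exp (t • S) v)) t := by
    simpa using (hasDerivAt_exp_smul_const' (𝕂 := ℝ) S t).clm_apply (hasDerivAt_const t v)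
  have happly (t : ℝ) (v : E) : Unitary.linearIsometryEquiv ⟨_, hunitary t⟩ v =
      NormedSpace.exp (t • S) v := rfl
  refine ⟨fun t => b.map (Unitary.linearIsometryEquiv ⟨_, hunitary t⟩), ?_, fun i => ?_⟩
  · refine DFunLike.ext _ _ fun i => ?_
    rw [OrthonormalBasis.map_apply, happly, zero_smul, NormedSpace.exp_zero]
    rfl
  · refine ⟨fun t => S (NormedSpace.exp (t • S) (b i)), .of_forall fun t => ?_, by simp, ?_⟩
    · simpa only [OrthonormalBasis.map_apply, happly] using hderiv (b i) t
    · have hchain : HasDerivAt (fun s : ℝ => S (NormedSpace.exp (s • S) (b i)))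
          (S (S (NormedSpace.exp ((0 : ℝ) • S) (b i)))) 0 :=
        S.hasFDerivAt.comp_hasDerivAt 0 (hderiv (b i) 0)
      simpa using hchain

/-- At `x`, the frame `b` minimizes the `g`-weighted trace of the Hessian of `u` among all
orthonormal frames at all points near `x`. -/
def IsLocalMinFrame (g : ι → ℝ) (u : E → ℝ) (x : E) (b : OrthonormalBasis ι ℝ E) : Prop :=
  ∀ᶠ y in 𝓝 x, ∀ e : OrthonormalBasis ι ℝ E,
    weightedTrace g (D²u x) b ≤ weightedTrace g (D²u y) e

namespace IsLocalMinFrame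

theorem sum_mul_D3_eq_zero (h : IsLocalMinFrame g u x b) (hu : ContDiffAt ℝ 4 u x) (v : E) :
    ∑ i, g i * D³u x v (b i) (b i) = 0 := by
  have hD2 : ContDiffAt ℝ 2 (D²u) x :=
    (hu.fderiv_right (m := 3) (by norm_num)).fderiv_right (by norm_num)
  have hjet := HasTwoJetAt.sum (I := Finset.univ) fun i _ =>
    (((hasTwoJetAt_comp_line hD2 v).clm_apply (.const (b i))).clm_apply
      (.const (b i))).const_mul (g i)
  have hmin : IsLocalMin (fun s : ℝ => ∑ i, g i * D²u (x + s • v) (b i) (b i)) 0 := by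
    filter_upwards [(tendsto_line x v).eventually h] with s hs
    simpa [weightedTrace] using hs b
  simpa using (hjet.of_isLocalMin hmin).1

theorem secondVariation_nonneg [CompleteSpace E] (h : IsLocalMinFrame g u x b)
    (hu : ContDiffAt ℝ 4 u x) {S : E →L[ℝ] E} (hS : S ∈ skewAdjoint (E →L[ℝ] E)) (v : E) :
    0 ≤ ∑ i, g i * (D⁴u x v v (b i) (b i) + 4 * D³u x v (b i) (S (b i))
      + 2 * D²u x (S (b i)) (S (b i)) + 2 * D²u x (b i) (S (S (b i)))) := by
  obtain ⟨e, he, hjet⟩ := exists_orthonormalBasis_curve hS b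
  have hD2 : ContDiffAt ℝ 2 (D²u) x :=
    (hu.fderiv_right (m := 3) (by norm_num)).fderiv_right (by norm_num)
  have hsum := HasTwoJetAt.sum (I := Finset.univ) fun i _ =>
    (((hasTwoJetAt_comp_line hD2 v).clm_apply (hjet i)).clm_apply (hjet i)).const_mul (g i)
  have hmin : IsLocalMin (fun s : ℝ => ∑ i, g i * D²u (x + s • v) (e s i) (e s i)) 0 := by
    filter_upwards [(tendsto_line x v).eventually h] with s hs
    simpa [weightedTrace, he] using hs (e s)
  refine (hsum.of_isLocalMin hmin).2.trans_eq (Finset.sum_congr rfl fun i _ => ?_)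
  simp only [he, zero_smul, add_zero, add_apply, smul_apply, smul_eq_mul]
  rw [D3_symm_right (hu.of_le (by norm_num)) v (S (b i)),
    D2_symm (hu.of_le (by norm_num)) (S (S (b i)))]
  ring

end IsLocalMinFrame

/-- The infinitesimal rotation in the plane of `p` and `q`, turning `p` towards `q` when they
are orthogonal. -/
def infinitesimalRotation (p q : E) : E →L[ℝ] E :=
  (innerSL ℝ p).smulRight q - (innerSL ℝ q).smulRight p

theorem infinitesimalRotation_apply (p q v : E) :
    infinitesimalRotation p q v = inner ℝ p v • q - inner ℝ q v • p := rfl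

theorem infinitesimalRotation_mem_skewAdjoint [CompleteSpace E] (p q : E) :
    infinitesimalRotation p q ∈ skewAdjoint (E →L[ℝ] E) := by
  rw [skewAdjoint.mem_iff, ContinuousLinearMap.star_eq_adjoint, eq_comm,
    ContinuousLinearMap.eq_adjoint_iff]
  intro v w
  simp only [neg_apply, infinitesimalRotation_apply, inner_neg_left,
    inner_sub_left, inner_sub_right, inner_smul_left, inner_smul_right, conj_trivial]
  rw [real_inner_comm v q, real_inner_comm v p]
  ring

/-- The directions `b i` in which the frame can be rotated against `b i₁` so as to gain a definite
multiple of `g i * D³u x (b i₁) (b i₁) (b i) ^ 2` in the second variation. -/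
def gainSet (g lam : ι → ℝ) (i₁ : ι) : Set ι :=
  {i | 6 * g i₁ < g i ∧ -(lam i₁ / 4) ≤ lam i}

theorem rotation_term [DecidableEq ι] (hu : ContDiffAt ℝ 3 u x)
    (hb : IsEigenframe (D²u x) lam b) (i₁ i : ι) {σ : E} (hσ : inner ℝ (b i₁) σ = 0) :
    let R := infinitesimalRotation (b i₁) σ
    g i * (D⁴u x (b i₁) (b i₁) (b i) (b i) + 4 * D³u x (b i₁) (b i) (R (b i))
      + 2 * D²u x (R (b i)) (R (b i)) + 2 * D²u x (b i) (R (R (b i)))) =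
    g i * D⁴u x (b i₁) (b i₁) (b i) (b i)
      + (if i₁ = i then g i₁ * (4 * D³u x (b i₁) (b i₁) σ + 2 * D²u x σ σ
          - 2 * lam i₁ * ‖σ‖ ^ 2) else 0)
      + g i * (2 * inner ℝ (b i) σ ^ 2 * (lam i₁ - lam i)
          - 4 * (inner ℝ (b i) σ * D³u x (b i₁) (b i₁) (b i))) := by
  intro R
  have hR : R (b i) = (if i₁ = i then (1 : ℝ) else 0) • σ - inner ℝ (b i) σ • b i₁ := by
    rw [infinitesimalRotation_apply, b.inner_eq_ite, real_inner_comm]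
  have hRσ : R σ = -(‖σ‖ ^ 2 • b i₁) := by
    rw [infinitesimalRotation_apply, hσ, real_inner_self_eq_norm_sq, zero_smul, zero_sub]
  have hR₁ : R (b i₁) = σ := by
    rw [infinitesimalRotation_apply, real_inner_self_eq_norm_sq, real_inner_comm, hσ]
    simp
  obtain rfl | hne := eq_or_ne i₁ i
  · simp [hR₁, hRσ, hσ, hb i₁, inner_smul_right]
    ring
  · rw [hR, if_neg hne, zero_smul, zero_sub]
    simp [hR₁, hne, hb.apply_self, hb i, D3_symm_right hu _ (b i) (b i₁), inner_smul_right]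
    ring

theorem rotation_gain {g₁ g₂ l₁ l₂ a : ℝ} (hg : 6 * g₁ < g₂) (hl : -(l₁ / 4) ≤ l₂) (hg₁ : 0 < g₁)
    (hl₁ : 0 < l₁) :
    4 * (4 / 5 * a) * (l₁ * a) * (g₁ - g₂) + 2 * (4 / 5 * a) ^ 2 * (l₁ - l₂) * (g₂ - g₁)
      ≤ -(4 / 3 * (g₂ * a ^ 2) * l₁) := by
  have hcurv : 0 ≤ a ^ 2 * (g₂ - g₁) * (l₁ / 4 + l₂) :=
    mul_nonneg (mul_nonneg (sq_nonneg a) (by linarith)) (by linarith)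
  have hgap : 0 ≤ l₁ * a ^ 2 * (g₂ - 6 * g₁) := mul_nonneg (by positivity) (by linarith)
  nlinarith

namespace IsLocalMinFrame

theorem rotation_nonneg [CompleteSpace E] (h : IsLocalMinFrame g u x b) (hu : ContDiffAt ℝ 4 u x)
    (hb : IsEigenframe (D²u x) lam b) (i₁ : ι) {s : ι → ℝ} (hs : s i₁ = 0) :
    0 ≤ ∑ i, g i * D⁴u x (b i₁) (b i₁) (b i) (b i)
      + ∑ i, (4 * s i * D³u x (b i₁) (b i₁) (b i) * (g i₁ - g i)
        + 2 * s i ^ 2 * (lam i₁ - lam i) * (g i - g i₁)) := by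
  classical
  set σ : E := ∑ j, s j • b j with hσ
  have hinner (i : ι) : inner ℝ (b i) σ = s i := b.orthonormal.inner_right_fintype s i
  have hD3 : D³u x (b i₁) (b i₁) σ = ∑ j, s j * D³u x (b i₁) (b i₁) (b j) := by
    simp only [hσ, map_sum, map_smul, smul_eq_mul]
  have hD2 : D²u x σ σ = ∑ j, s j ^ 2 * lam j := by
    rw [hb.apply_eq_sum]
    exact Finset.sum_congr rfl fun j _ => by rw [hinner]; ring
  have hnorm : ‖σ‖ ^ 2 = ∑ j, s j ^ 2 := by
    rw [← b.sum_sq_inner_right]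
    simp only [hinner]
  have hvar := h.secondVariation_nonneg hu
    (infinitesimalRotation_mem_skewAdjoint (b i₁) σ) (b i₁)
  refine hvar.trans_eq ?_
  rw [Finset.sum_congr rfl fun i _ => rotation_term (hu.of_le (by norm_num)) hb i₁ i
    ((hinner i₁).trans hs), Finset.sum_add_distrib, Finset.sum_add_distrib, Finset.sum_ite_eq,
    if_pos (Finset.mem_univ _), hD3, hD2, hnorm]
  simp only [hinner, Finset.mul_sum, ← Finset.sum_add_distrib, ← Finset.sum_sub_distrib]
  exact Finset.sum_congr rfl fun i _ => by ring

theorem sum_gainSet_le [CompleteSpace E] (h : IsLocalMinFrame g u x b) (hu : ContDiffAt ℝ 4 u x)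
    (hb : IsEigenframe (D²u x) lam b) {i₁ : ι} (hg : 0 < g i₁) (hlam : 0 < lam i₁) :
    ∑ i, (gainSet g lam i₁).indicator
        (fun i => g i * (4 / 3 * (D³u x (b i₁) (b i₁) (b i) / lam i₁) ^ 2)) i
      ≤ (∑ i, g i * D⁴u x (b i₁) (b i₁) (b i) (b i)) / lam i₁ := by
  set a : ι → ℝ := fun i => D³u x (b i₁) (b i₁) (b i) / lam i₁
  have hD3 (i : ι) : D³u x (b i₁) (b i₁) (b i) = lam i₁ * a i :=
    (mul_div_cancel₀ _ hlam.ne').symm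
  have hnotMem : i₁ ∉ gainSet g lam i₁ := fun hmem => by linarith [hmem.1]
  have hrot := h.rotation_nonneg hu hb i₁ (s := (gainSet g lam i₁).indicator fun i => 4 / 5 * a i)
    (Set.indicator_of_notMem hnotMem _)
  rw [le_div_iff₀ hlam, Finset.sum_mul, ← sub_nonneg, ← Finset.sum_sub_distrib]
  rw [← Finset.sum_add_distrib] at hrot
  refine hrot.trans (Finset.sum_le_sum fun i _ => ?_)
  by_cases hi : i ∈ gainSet g lam i₁
  · simp only [Set.indicator_of_mem hi, hD3, mul_div_cancel_left₀ _ hlam.ne']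
    linarith [rotation_gain (a := a i) hi.1 hi.2 hg hlam]
  · simp [Set.indicator_of_notMem hi]

end IsLocalMinFrame

end FrameVariation

/-- Parameters of the Pogorelov-type test function
`(-u - δ)^β · D²u(e,e) · exp (ε (-u - δ)^m |∇u|² + B/2 |y - center|²)`. -/
structure PogorelovTest (E : Type*) where
  β : ℕ
  m : ℕ
  ε : ℝ
  B : ℝ
  δ : ℝ
  center : E

namespace PogorelovTest

variable {ι E : Type*} [Fintype ι] [NormedAddCommGroup E] [InnerProductSpace ℝ E]
  {T : PogorelovTest E} {u : E → ℝ} {x y v e : E} {l : ℝ}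

/-- The depth `-u - δ` below the level `-δ`, which localizes the test function. -/
def depth (T : PogorelovTest E) (u : E → ℝ) (y : E) : ℝ := -u y - T.δ

theorem hasTwoJetAt_depth (hu : ContDiffAt ℝ 2 u x) (v : E) :
    HasTwoJetAt (fun t : ℝ => T.depth u (x + t • v)) (-fderiv ℝ u x v) (-D²u x v v) 0 :=
  (hasTwoJetAt_comp_line hu v).neg.sub_const T.δ

variable [CompleteSpace E]

/-- The exponent `ε (-u - δ)^m |∇u|² + B/2 |y - center|²` of the test function. -/
def exponent (T : PogorelovTest E) (u : E → ℝ) (y : E) : ℝ :=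
  T.ε * (T.depth u y ^ T.m * ‖gradient u y‖ ^ 2) + T.B / 2 * ‖y - T.center‖ ^ 2

/-- The test function in the direction `e`. -/
def value (T : PogorelovTest E) (u : E → ℝ) (e y : E) : ℝ :=
  T.depth u y ^ T.β * D²u y e e * Real.exp (T.exponent u y)

theorem hasTwoJetAt_gradient (hu : ContDiffAt ℝ 3 u x) (hv : ∀ z, D²u x v z = l * inner ℝ v z) :
    HasTwoJetAt (fun t : ℝ => gradient u (x + t • v)) (l • v)
      ((InnerProductSpace.toDual ℝ E).symm (D³u x v v)) 0 := by
  have hD1 : ContDiffAt ℝ 2 (fderiv ℝ u) x := hu.fderiv_right (by norm_num)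
  have hD2 : (InnerProductSpace.toDual ℝ E).symm (D²u x v) = l • v := by
    refine (InnerProductSpace.toDual ℝ E).symm_apply_eq.2 ?_
    ext z
    simp [hv]
  rw [← hD2]
  exact (hasTwoJetAt_comp_line hD1 v).clm_comp
    (InnerProductSpace.toDual ℝ E).symm.toContinuousLinearEquiv.toContinuousLinearMap

theorem hasTwoJetAt_sq_norm_gradient (hu : ContDiffAt ℝ 3 u x)
    (hv : ∀ z, D²u x v z = l * inner ℝ v z) (hv_norm : ‖v‖ = 1) :
    HasTwoJetAt (fun t : ℝ => ‖gradient u (x + t • v)‖ ^ 2) (2 * (l * fderiv ℝ u x v))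
      (2 * l ^ 2 + 2 * D³u x v v (gradient u x)) 0 := by
  have hgrad : inner ℝ (gradient u x) v = fderiv ℝ u x v := InnerProductSpace.toDual_symm_apply
  have hD3 : inner ℝ (gradient u x) ((InnerProductSpace.toDual ℝ E).symm (D³u x v v)) =
      D³u x v v (gradient u x) := by
    rw [real_inner_comm, InnerProductSpace.toDual_symm_apply]
  convert (hasTwoJetAt_gradient hu hv).norm_sq using 1
  · simp only [zero_smul, add_zero, inner_smul_right, hgrad]
  · simp only [zero_smul, add_zero, norm_smul, hv_norm, hD3, mul_one, Real.norm_eq_abs, sq_abs]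

/-- The derivative of the exponent along a unit eigenvector `v` with eigenvalue `l`. -/
def slope (T : PogorelovTest E) (u : E → ℝ) (x v : E) (l : ℝ) : ℝ :=
  T.ε * (2 * T.depth u x ^ T.m * (l * fderiv ℝ u x v)
      - T.m * T.depth u x ^ (T.m - 1) * (fderiv ℝ u x v * ‖gradient u x‖ ^ 2))
    + T.B * inner ℝ (x - T.center) v

/-- The leading part of the second derivative of the exponent along a unit eigenvector `v` with
eigenvalue `l`; the remaining terms are nonnegative or summed explicitly over a frame. -/
def curvature (T : PogorelovTest E) (u : E → ℝ) (x v : E) (l : ℝ) : ℝ :=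
  T.ε * (2 * T.depth u x ^ T.m * l ^ 2
    - 4 * T.m * T.depth u x ^ (T.m - 1) * fderiv ℝ u x v ^ 2 * l) + T.B

theorem hasTwoJetAt_exponent (hu : ContDiffAt ℝ 3 u x)
    (hv : ∀ z, D²u x v z = l * inner ℝ v z) (hv_norm : ‖v‖ = 1) :
    HasTwoJetAt (fun t : ℝ => T.exponent u (x + t • v)) (T.slope u x v l)
      (T.curvature u x v l
        + T.ε * (2 * T.depth u x ^ T.m * D³u x v v (gradient u x)
          - T.m * T.depth u x ^ (T.m - 1) * ‖gradient u x‖ ^ 2 * l)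
        + T.ε * (T.m * (T.m - 1 : ℕ) * T.depth u x ^ (T.m - 2)
          * fderiv ℝ u x v ^ 2 * ‖gradient u x‖ ^ 2)) 0 := by
  have hpow := (hasTwoJetAt_depth (T := T) (hu.of_le (by norm_num)) v).pow T.m
  have hcenter := ((hasTwoJetAt_line x v 0).sub_const T.center).norm_sq
  have hl : D²u x v v = l := by rw [hv, real_inner_self_eq_norm_sq, hv_norm]; ring
  convert ((hpow.mul (hasTwoJetAt_sq_norm_gradient hu hv hv_norm)).const_mul T.ε).add
    (hcenter.const_mul (T.B / 2)) using 1
  · rfl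
  · simp only [slope, zero_smul, add_zero]
    ring
  · simp only [curvature, zero_smul, add_zero, hl, hv_norm, inner_zero_right]
    ring

theorem isLocalMax_log_value (hmax : IsLocalMax (T.value u e) x) (hu : ContDiffAt ℝ 4 u x)
    (hdepth : 0 < T.depth u x) (he : 0 < D²u x e e) :
    IsLocalMax (fun y => Real.log (D²u y e e) + T.β * Real.log (T.depth u y) + T.exponent u y)
      x := by
  have hD2 : ContDiffAt ℝ 2 (D²u) x :=
    (hu.fderiv_right (m := 3) (by norm_num)).fderiv_right (by norm_num)
  have hlog {y : E} (hdepth : 0 < T.depth u y) (he : 0 < D²u y e e) :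
      Real.log (T.value u e y) =
        Real.log (D²u y e e) + T.β * Real.log (T.depth u y) + T.exponent u y := by
    rw [value, Real.log_mul (by positivity) (by positivity), Real.log_mul (by positivity) he.ne',
      Real.log_exp, Real.log_pow]
    ring
  have hdepth_ev : ∀ᶠ y in 𝓝 x, 0 < T.depth u y :=
    (hu.continuousAt.neg.sub continuousAt_const).eventually (lt_mem_nhds hdepth)
  have he_ev : ∀ᶠ y in 𝓝 x, 0 < D²u y e e :=
    ((hD2.continuousAt.clm_apply continuousAt_const).clm_apply continuousAt_const).eventually
      (lt_mem_nhds he)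
  filter_upwards [hmax, hdepth_ev, he_ev] with y hy hdepth_y he_y
  rw [← hlog hdepth he, ← hlog hdepth_y he_y]
  exact Real.log_le_log (by rw [value]; positivity) hy

theorem hasTwoJetAt_log_value (hu : ContDiffAt ℝ 4 u x) (hdepth : 0 < T.depth u x)
    (he : 0 < D²u x e e) (hv : ∀ z, D²u x v z = l * inner ℝ v z) (hv_norm : ‖v‖ = 1) :
    HasTwoJetAt (fun t : ℝ => Real.log (D²u (x + t • v) e e)
        + T.β * Real.log (T.depth u (x + t • v)) + T.exponent u (x + t • v))
      (D³u x v e e / D²u x e e - T.β * (fderiv ℝ u x v / T.depth u x) + T.slope u x v l)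
      (D⁴u x v v e e / D²u x e e - (D³u x v e e / D²u x e e) ^ 2
        - T.β * (l / T.depth u x + (fderiv ℝ u x v / T.depth u x) ^ 2)
        + (T.curvature u x v l
          + T.ε * (2 * T.depth u x ^ T.m * D³u x v v (gradient u x)
            - T.m * T.depth u x ^ (T.m - 1) * ‖gradient u x‖ ^ 2 * l)
          + T.ε * (T.m * (T.m - 1 : ℕ) * T.depth u x ^ (T.m - 2)
            * fderiv ℝ u x v ^ 2 * ‖gradient u x‖ ^ 2))) 0 := by
  have hD2 : ContDiffAt ℝ 2 (D²u) x :=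
    (hu.fderiv_right (m := 3) (by norm_num)).fderiv_right (by norm_num)
  have hl : D²u x v v = l := by rw [hv, real_inner_self_eq_norm_sq, hv_norm]; ring
  have hentry := (((hasTwoJetAt_comp_line hD2 v).clm_apply (.const e)).clm_apply
    (.const e)).log (by simpa using he.ne')
  have hdepth' := ((hasTwoJetAt_depth (T := T) (hu.of_le (by norm_num)) v).log
    (by simpa using hdepth.ne')).const_mul (T.β : ℝ)
  convert (hentry.add hdepth').add (hasTwoJetAt_exponent (hu.of_le (by norm_num)) hv hv_norm)
    using 1
  · simp only [zero_smul, add_zero, map_zero]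
    ring
  · simp only [zero_smul, add_zero, map_zero, smul_zero, hl]
    ring

theorem derivative_test_of_isLocalMax (hmax : IsLocalMax (T.value u e) x)
    (hu : ContDiffAt ℝ 4 u x) (hε : 0 ≤ T.ε) (hdepth : 0 < T.depth u x) (he : 0 < D²u x e e)
    (hv : ∀ z, D²u x v z = l * inner ℝ v z) (hv_norm : ‖v‖ = 1) :
    D³u x v e e / D²u x e e = T.β * (fderiv ℝ u x v / T.depth u x) - T.slope u x v l ∧
      D⁴u x v v e e / D²u x e e + (T.curvature u x v l - (D³u x v e e / D²u x e e) ^ 2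
          - T.β * (fderiv ℝ u x v / T.depth u x) ^ 2)
        ≤ T.β / T.depth u x * l
          + T.ε * (T.m * T.depth u x ^ (T.m - 1) * ‖gradient u x‖ ^ 2 * l
            - 2 * T.depth u x ^ T.m * D³u x v v (gradient u x)) := by
  have hline : IsLocalMax (fun t : ℝ => Real.log (D²u (x + t • v) e e)
      + T.β * Real.log (T.depth u (x + t • v)) + T.exponent u (x + t • v)) 0 := by
    filter_upwards [(tendsto_line x v).eventually (isLocalMax_log_value hmax hu hdepth he)]
      with t ht
    simpa only [zero_smul, add_zero] using ht
  obtain ⟨hfirst, hsecond⟩ := (hasTwoJetAt_log_value hu hdepth he hv hv_norm).of_isLocalMax hline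
  have hdropped : 0 ≤ T.ε * (T.m * (T.m - 1 : ℕ) * T.depth u x ^ (T.m - 2)
      * fderiv ℝ u x v ^ 2 * ‖gradient u x‖ ^ 2) := by positivity
  exact ⟨by linarith, by linear_combination hsecond + hdropped⟩

theorem sum_curvature_le {g lam : ι → ℝ} {b : OrthonormalBasis ι ℝ E} {i₁ : ι}
    (hmax : IsLocalMax (T.value u (b i₁)) x) (hu : ContDiffAt ℝ 4 u x) (hε : 0 ≤ T.ε)
    (hdepth : 0 < T.depth u x) (hframe : IsLocalMinFrame g u x b)
    (hb : IsEigenframe (D²u x) lam b) (hg : ∀ i, 0 ≤ g i) (hsum : ∑ i, g i * lam i = 1)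
    (hlam : 0 < lam i₁) :
    (∑ i, g i * D⁴u x (b i₁) (b i₁) (b i) (b i)) / lam i₁
        + ∑ i, g i * (T.curvature u x (b i) (lam i)
          - (D³u x (b i₁) (b i₁) (b i) / lam i₁) ^ 2
          - T.β * (fderiv ℝ u x (b i) / T.depth u x) ^ 2)
      ≤ T.β / T.depth u x + T.ε * (T.m * T.depth u x ^ (T.m - 1) * ‖gradient u x‖ ^ 2) := by
  have hu3 : ContDiffAt ℝ 3 u x := hu.of_le (by norm_num)
  have he : 0 < D²u x (b i₁) (b i₁) := by rwa [hb.apply_self]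
  have hpoint (i : ι) : D⁴u x (b i₁) (b i₁) (b i) (b i) / lam i₁
      + (T.curvature u x (b i) (lam i) - (D³u x (b i₁) (b i₁) (b i) / lam i₁) ^ 2
        - T.β * (fderiv ℝ u x (b i) / T.depth u x) ^ 2)
      ≤ T.β / T.depth u x * lam i
        + T.ε * (T.m * T.depth u x ^ (T.m - 1) * ‖gradient u x‖ ^ 2 * lam i
          - 2 * T.depth u x ^ T.m * D³u x (gradient u x) (b i) (b i)) := by
    have htest := (derivative_test_of_isLocalMax hmax hu hε hdepth he (hb i) (b.norm_eq_one i)).2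
    rwa [D4_symm_pairs hu, D3_symm_left hu3 (b i) (b i₁), D3_symm_right hu3 (b i₁) (b i),
      D3_symm_right hu3 (b i) (b i) (gradient u x), D3_symm_left hu3 (b i) (gradient u x),
      hb.apply_self] at htest
  have htrace := hframe.sum_mul_D3_eq_zero hu (gradient u x)
  rw [Finset.sum_div, ← Finset.sum_add_distrib]
  calc _ ≤ ∑ i, g i * (T.β / T.depth u x * lam i
        + T.ε * (T.m * T.depth u x ^ (T.m - 1) * ‖gradient u x‖ ^ 2 * lam i
          - 2 * T.depth u x ^ T.m * D³u x (gradient u x) (b i) (b i))) := by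
        refine Finset.sum_le_sum fun i _ => ?_
        rw [mul_div_assoc, ← mul_add]
        exact mul_le_mul_of_nonneg_left (hpoint i) (hg i)
    _ = (T.β / T.depth u x + T.ε * (T.m * T.depth u x ^ (T.m - 1) * ‖gradient u x‖ ^ 2))
          * (∑ i, g i * lam i)
        - T.ε * (2 * T.depth u x ^ T.m) * ∑ i, g i * D³u x (gradient u x) (b i) (b i) := by
        rw [Finset.mul_sum, Finset.mul_sum, ← Finset.sum_sub_distrib]
        exact Finset.sum_congr rfl fun i _ => by ring
    _ = _ := by rw [hsum, htrace]; ring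

theorem exponent_nonneg_of_depth_nonneg (hε : 0 ≤ T.ε) (hB : 0 ≤ T.B)
    (hdepth : 0 ≤ T.depth u x) : 0 ≤ T.exponent u x := by
  unfold exponent
  positivity

theorem pos_of_value_pos (hβ : T.β ≠ 0) (hdepth : 0 ≤ T.depth u x)
    (hvalue : 0 < T.value u e x) : 0 < T.depth u x ∧ 0 < D²u x e e := by
  have hprod : 0 < T.depth u x ^ T.β * D²u x e e :=
    pos_of_mul_pos_left hvalue (Real.exp_pos _).le
  refine ⟨hdepth.lt_of_ne fun h => ?_, pos_of_mul_pos_right hprod (by positivity)⟩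
  simp [← h, hβ] at hprod

theorem value_le_of_isEigenframe {lam : ι → ℝ}
    {b : OrthonormalBasis ι ℝ E} {i₁ : ι} (hb : IsEigenframe (D²u x) lam b)
    (hi₁ : ∀ i, lam i ≤ lam i₁) (he : ‖e‖ = 1) (hdepth : 0 ≤ T.depth u x) :
    T.value u e x ≤ T.value u (b i₁) x := by
  unfold value
  gcongr
  simpa [hb.apply_self, he] using hb.apply_le hi₁ e

theorem continuousAt_value (hu : ContDiffAt ℝ 2 u x) (e : E) :
    ContinuousAt (fun p : E × E => T.value u p.2 p.1) (x, e) := by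
  have hD1 : ContDiffAt ℝ 1 (fderiv ℝ u) x := hu.fderiv_right (by norm_num)
  have hD2 : ContinuousAt (D²u) x :=
    (hD1.fderiv_right (m := 0) (by norm_num)).continuousAt
  have hgrad : ContinuousAt (gradient u) x :=
    (InnerProductSpace.toDual ℝ E).symm.continuous.continuousAt.comp hD1.continuousAt
  have : ContinuousAt (fun p : E × E => u p.1) (x, e) :=
    ContinuousAt.comp (f := Prod.fst) hu.continuousAt continuousAt_fst
  have hD2_fst : ContinuousAt (fun p : E × E => D²u p.1) (x, e) :=
    ContinuousAt.comp (f := Prod.fst) hD2 continuousAt_fst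
  have hgrad_fst : ContinuousAt (fun p : E × E => gradient u p.1) (x, e) :=
    ContinuousAt.comp (f := Prod.fst) (g := gradient u) hgrad continuousAt_fst
  unfold value exponent depth
  fun_prop

theorem exists_value_le [FiniteDimensional ℝ E] {K : Set E} (hK : IsCompact K)
    (hu : ∀ x ∈ K, ContDiffAt ℝ 2 u x) (hy : y ∈ K) (he : ‖e‖ = 1) :
    ∃ x ∈ K, ∃ e₀, ‖e₀‖ = 1 ∧
      ∀ y ∈ K, ∀ e, ‖e‖ = 1 → T.value u e y ≤ T.value u e₀ x := by
  have : ProperSpace E := FiniteDimensional.proper_real E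
  obtain ⟨⟨x, e₀⟩, ⟨hx, he₀⟩, hmax⟩ :=
    (hK.prod (isCompact_sphere (0 : E) 1)).exists_isMaxOn
      (f := fun p => T.value u p.2 p.1) ⟨(y, e), hy, by simpa using he⟩
      fun p hp => (continuousAt_value (hu p.1 hp.1) p.2).continuousWithinAt
  exact ⟨x, hx, e₀, by simpa using he₀, fun y hy e he =>
    isMaxOn_iff.1 hmax (y, e) ⟨hy, by simpa using he⟩⟩

end PogorelovTest

/-- The quantities on which the constants of the estimate depend: `‖u‖ ≤ M`, `(-u)^a |∇u| ≤ K`,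
`diam Ω ≤ d`, and condition N with constants `N` and `k`. -/
structure EstimateData where
  a : ℕ
  k : ℕ
  M : ℝ
  K : ℝ
  d : ℝ
  N : ℝ
  one_le_M : 1 ≤ M
  K_pos : 0 < K
  N_pos : 0 < N

namespace EstimateData

variable (S : EstimateData)

/-- The power of the depth in front of the gradient term of the test function. -/
def m : ℕ := 4 * S.a + 2

/-- A bound for `w^(2a+2) |∇u|²`, where `w` is the depth. -/
def gradBound : ℝ := S.M ^ (2 * S.a + 2) * S.K ^ 2

/-- The coefficient of the gradient term, small enough that the square of the slope of the exponent
is absorbed by its curvature. -/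
def ε : ℝ := 1 / (96 * S.gradBound)

/-- The coefficient of `|y - center|²/2`, which pays for the cross term of the curvature. -/
def B : ℝ := 4 * S.ε * S.m ^ 2 * S.K ^ 4 + 2

/-- The bounded part of the square of the slope of the exponent. -/
def slopeBound : ℝ := 3 * S.ε ^ 2 * S.m ^ 2 * S.gradBound * S.K ^ 4 + 3 * S.B ^ 2 * S.d ^ 2

/-- The power of the depth in the estimate. -/
def β : ℕ := 6 + ⌈2 * S.slopeBound⌉₊ + S.m + (2 * S.a + 2) + (S.k + 1)

/-- The loss in the indices whose first-order condition is not used, times `w^(2a+2)`. -/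
def lossBound : ℝ := 3 * S.β ^ 2 * S.K ^ 2 + 2 * S.slopeBound * S.M ^ (2 * S.a + 2)

/-- A bound for the depth times `Σ ∂f/∂λᵢ` at a maximum of the test function. -/
def traceBound : ℝ := (S.β + S.m) * S.M

/-- A bound for `w^β λ₁` at a maximum of the test function in dimension `n`. -/
def eigenBound (n : ℕ) : ℝ :=
  √(S.M ^ (2 * S.β) * (((64 + 48 * n) * S.lossBound + 8 * S.N * S.traceBound ^ (S.k + 1)) / S.ε))

theorem M_pos : 0 < S.M := zero_lt_one.trans_le S.one_le_M

theorem gradBound_pos : 0 < S.gradBound := by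
  have := S.M_pos
  have := S.K_pos
  unfold gradBound
  positivity

theorem ε_pos : 0 < S.ε := by
  have := S.gradBound_pos
  unfold ε
  positivity

theorem ε_mul_gradBound : S.ε * S.gradBound = 1 / 96 := by
  have := S.gradBound_pos.ne'
  unfold ε
  field_simp

theorem slopeBound_nonneg : 0 ≤ S.slopeBound := by
  have := S.gradBound_pos
  unfold slopeBound
  positivity

theorem six_le_β : (6 : ℝ) ≤ S.β := by
  exact_mod_cast (by unfold β; omega : 6 ≤ S.β)

theorem β_ne_zero : S.β ≠ 0 := by
  unfold β
  omega

theorem B_nonneg : 0 ≤ S.B := by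
  have := S.ε_pos
  unfold B
  positivity

theorem two_mul_slopeBound_le_β : 2 * S.slopeBound ≤ S.β :=
  (Nat.le_ceil _).trans (by exact_mod_cast (by unfold β; omega : ⌈2 * S.slopeBound⌉₊ ≤ S.β))

theorem lossBound_pos : 0 < S.lossBound := by
  have := S.M_pos
  have := S.K_pos
  have := S.slopeBound_nonneg
  have := S.six_le_β
  unfold lossBound
  positivity

theorem traceBound_nonneg : 0 ≤ S.traceBound := by
  have := S.M_pos
  unfold traceBound
  positivity

/-- The normalized variables `W = w^(2a+2)`, `s = uᵢ/w`, `ρ = w^(2a) |∇u|²` and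
`ξ = ⟪y - center, bᵢ⟫` at a point of depth `w` satisfy the bounds prescribed by the data. -/
structure Bounds (W s ρ ξ : ℝ) : Prop where
  W_pos : 0 < W
  W_le : W ≤ S.M ^ (2 * S.a + 2)
  mul_sq_le : W * s ^ 2 ≤ ρ
  ρ_le : ρ ≤ S.K ^ 2
  sq_le : ξ ^ 2 ≤ S.d ^ 2

namespace Bounds

variable {S} {W s ρ ξ : ℝ}

theorem curvature_ge (h : S.Bounds W s ρ ξ) (z : ℝ) :
    S.ε * z ^ 2 + 2 ≤ S.ε * (2 * z ^ 2 - 4 * S.m * W * s ^ 2 * z) + S.B := by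
  have hWs : 0 ≤ W * s ^ 2 := mul_nonneg h.W_pos.le (sq_nonneg s)
  have hWs_sq : (W * s ^ 2) ^ 2 ≤ S.K ^ 4 :=
    (pow_le_pow_left₀ hWs (h.mul_sq_le.trans h.ρ_le) 2).trans_eq (by ring)
  have hcross : 4 * S.m * W * s ^ 2 * z ≤ z ^ 2 + 4 * S.m ^ 2 * S.K ^ 4 := by
    nlinarith [sq_nonneg (z - 2 * S.m * (W * s ^ 2)),
      mul_le_mul_of_nonneg_left hWs_sq (sq_nonneg (S.m : ℝ))]
  have hε := S.ε_pos
  unfold B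
  linear_combination S.ε * hcross

theorem sq_slope_le (h : S.Bounds W s ρ ξ) (z : ℝ) :
    (S.ε * (W * s) * (2 * z - S.m * ρ) + S.B * ξ) ^ 2 ≤ S.ε / 8 * z ^ 2 + S.slopeBound := by
  have hM := S.M_pos
  have hWs_nonneg : 0 ≤ W * s ^ 2 := mul_nonneg h.W_pos.le (sq_nonneg s)
  have hWs : (W * s) ^ 2 ≤ S.gradBound := calc
    (W * s) ^ 2 = W * (W * s ^ 2) := by ring
    _ ≤ S.gradBound :=
      mul_le_mul h.W_le (h.mul_sq_le.trans h.ρ_le) hWs_nonneg (by positivity)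
  have hρ : ρ ^ 2 ≤ S.K ^ 4 :=
    (pow_le_pow_left₀ (hWs_nonneg.trans h.mul_sq_le) h.ρ_le 2).trans_eq (by ring)
  have hG := S.gradBound_pos
  calc (S.ε * (W * s) * (2 * z - S.m * ρ) + S.B * ξ) ^ 2
      ≤ 3 * (2 * S.ε * (W * s) * z) ^ 2 + 3 * (S.ε * (W * s) * (S.m * ρ)) ^ 2
          + 3 * (S.B * ξ) ^ 2 := by
        nlinarith [sq_nonneg (2 * S.ε * (W * s) * z + S.ε * (W * s) * (S.m * ρ)),
          sq_nonneg (2 * S.ε * (W * s) * z - S.B * ξ),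
          sq_nonneg (S.ε * (W * s) * (S.m * ρ) + S.B * ξ)]
    _ = 12 * S.ε ^ 2 * z ^ 2 * (W * s) ^ 2 + 3 * S.ε ^ 2 * S.m ^ 2 * ((W * s) ^ 2 * ρ ^ 2)
          + 3 * S.B ^ 2 * ξ ^ 2 := by ring
    _ ≤ 12 * S.ε ^ 2 * z ^ 2 * S.gradBound + 3 * S.ε ^ 2 * S.m ^ 2 * (S.gradBound * S.K ^ 4)
          + 3 * S.B ^ 2 * S.d ^ 2 := by
        have := h.sq_le
        gcongr
    _ = S.ε / 8 * z ^ 2 + S.slopeBound := by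
        unfold slopeBound
        linear_combination 12 * S.ε * z ^ 2 * S.ε_mul_gradBound

variable {z r : ℝ}

-- `β s² = (r + slope)² / β ≤ r² / 3 + 2 slope² / β` since `β ≥ 6`.
theorem gain (h : S.Bounds W s ρ ξ)
    (hr : r = S.β * s - (S.ε * (W * s) * (2 * z - S.m * ρ) + S.B * ξ)) :
    S.ε / 2 * z ^ 2 + 1 ≤ 4 / 3 * r ^ 2
      + (S.ε * (2 * z ^ 2 - 4 * S.m * W * s ^ 2 * z) + S.B - r ^ 2 - S.β * s ^ 2) := by
  set slope := S.ε * (W * s) * (2 * z - S.m * ρ) + S.B * ξ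
  have hβ := S.six_le_β
  have hβ_pos : (0 : ℝ) < S.β := by linarith
  have hslope : slope ^ 2 ≤ S.ε / 8 * z ^ 2 + S.slopeBound := h.sq_slope_le z
  have hcurv := h.curvature_ge z
  have hsq : S.β * s ^ 2 ≤ r ^ 2 / 3 + (S.ε / 24 * z ^ 2 + 1) := by
    refine le_of_mul_le_mul_left ?_ hβ_pos
    have hεz : 0 ≤ S.ε * z ^ 2 := by have := S.ε_pos; positivity
    have hbound := S.two_mul_slopeBound_le_β
    calc S.β * (S.β * s ^ 2) = (r + slope) ^ 2 := by rw [hr]; ring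
      _ ≤ 2 * r ^ 2 + 2 * slope ^ 2 := by linarith [add_sq_le (a := r) (b := slope)]
      _ ≤ S.β * (r ^ 2 / 3 + (S.ε / 24 * z ^ 2 + 1)) := by
        linear_combination 2 * hslope + hbound + (r ^ 2 / 3 + S.ε * z ^ 2 / 24) * hβ
  have hεz : 0 ≤ S.ε * z ^ 2 := by have := S.ε_pos; positivity
  linarith

theorem loss (h : S.Bounds W s ρ ξ)
    (hr : r = S.β * s - (S.ε * (W * s) * (2 * z - S.m * ρ) + S.B * ξ)) :
    S.ε / 2 * z ^ 2 + 1 - S.lossBound / W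
      ≤ S.ε * (2 * z ^ 2 - 4 * S.m * W * s ^ 2 * z) + S.B - r ^ 2 - S.β * s ^ 2 := by
  set slope := S.ε * (W * s) * (2 * z - S.m * ρ) + S.B * ξ
  have hW := h.W_pos
  have hslope : slope ^ 2 ≤ S.ε / 8 * z ^ 2 + S.slopeBound := h.sq_slope_le z
  have hcurv := h.curvature_ge z
  have hloss : 3 * S.β ^ 2 * s ^ 2 + 2 * S.slopeBound ≤ S.lossBound / W := by
    rw [le_div_iff₀ hW, lossBound]
    have hC₃ := S.slopeBound_nonneg
    have hW_le := h.W_le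
    have hWs := h.mul_sq_le.trans h.ρ_le
    linear_combination 3 * (S.β : ℝ) ^ 2 * hWs + 2 * S.slopeBound * hW_le
  have hr_sq : r ^ 2 ≤ 2 * S.β ^ 2 * s ^ 2 + 2 * slope ^ 2 := by
    rw [hr]
    linarith [sq_nonneg (S.β * s + slope)]
  have hβ : S.β * s ^ 2 ≤ S.β ^ 2 * s ^ 2 := by
    have := S.six_le_β
    gcongr
    exact le_self_pow₀ (by linarith) two_ne_zero
  have hεz : 0 ≤ S.ε * z ^ 2 := by have := S.ε_pos; positivity
  linarith

end Bounds

end EstimateData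

section Absorption

variable {ι : Type*} {g z Q t : ι → ℝ} {J : Set ι} {i₁ : ι} {ε c R : ℝ}

theorem le_or_sq_le_of_notMem_gainSet {lam : ι → ℝ} {i : ι} (hlam : 0 ≤ lam i₁)
    (hi : i ∉ gainSet g lam i₁) : g i ≤ 6 * g i₁ ∨ lam i₁ ^ 2 / 16 ≤ lam i ^ 2 := by
  rcases not_and_or.1 hi with h | h
  · exact .inl (not_lt.1 h)
  · exact .inr (by nlinarith [not_le.1 h])

theorem absorb_pointwise (hg : ∀ i, 0 < g i) (hε : 0 ≤ ε) (hc : 0 ≤ c)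
    (hgain : ∀ i ∈ J, ε / 2 * z i ^ 2 + 1 ≤ t i + Q i)
    (hloss : ∀ i, ε / 2 * z i ^ 2 + 1 - c ≤ Q i)
    (hJ : ∀ i ∉ J, g i ≤ 6 * g i₁ ∨ z i₁ ^ 2 / 16 ≤ z i ^ 2) (hz : 64 * c ≤ ε * z i₁ ^ 2) (i : ι) :
    g i * (ε / 4 * z i ^ 2 + 1) - 6 * c * g i₁
      ≤ J.indicator (fun i => g i * t i) i + g i * Q i := by
  have hgi := hg i
  have hεz : 0 ≤ ε * z i ^ 2 := by positivity
  have hcg : 0 ≤ c * g i₁ := mul_nonneg hc (hg i₁).le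
  by_cases hi : i ∈ J
  · rw [indicator_of_mem hi, ← mul_add]
    have := mul_le_mul_of_nonneg_left
      (show ε / 4 * z i ^ 2 + 1 ≤ t i + Q i by linarith [hgain i hi]) (hg i).le
    linarith
  rw [indicator_of_notMem hi, zero_add]
  have hQ := mul_le_mul_of_nonneg_left (hloss i) (hg i).le
  rcases hJ i hi with hsmall | hlarge
  · linear_combination hQ + c * hsmall + g i * hεz / 4
  · have hcz : c ≤ ε / 4 * z i ^ 2 := by linarith [mul_le_mul_of_nonneg_left hlarge hε]
    linear_combination hQ + g i * hcz + 6 * hcg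

variable [Fintype ι]

theorem absorb (hg : ∀ i, 0 < g i) (hε : 0 ≤ ε) (hc : 0 ≤ c)
    (hgain : ∀ i ∈ J, ε / 2 * z i ^ 2 + 1 ≤ t i + Q i)
    (hloss : ∀ i, ε / 2 * z i ^ 2 + 1 - c ≤ Q i)
    (hJ : ∀ i ∉ J, g i ≤ 6 * g i₁ ∨ z i₁ ^ 2 / 16 ≤ z i ^ 2)
    (hz : (64 + 48 * Fintype.card ι) * c ≤ ε * z i₁ ^ 2)
    (hR : ∑ i, J.indicator (fun i => g i * t i) i + ∑ i, g i * Q i ≤ R) :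
    ε / 8 * z i₁ ^ 2 * g i₁ + ∑ i, g i ≤ R := by
  have hcard : 0 ≤ Fintype.card ι * c := by positivity
  have htop : g i₁ * (ε / 4 * z i₁ ^ 2) ≤ ∑ i, g i * (ε / 4 * z i ^ 2) :=
    Finset.single_le_sum (f := fun i => g i * (ε / 4 * z i ^ 2))
      (fun i _ => by have := (hg i).le; positivity) (Finset.mem_univ i₁)
  have hcost : 6 * (Fintype.card ι * c) * g i₁ ≤ ε / 8 * z i₁ ^ 2 * g i₁ :=
    mul_le_mul_of_nonneg_right (by linarith) (hg i₁).le
  calc ε / 8 * z i₁ ^ 2 * g i₁ + ∑ i, g i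
      ≤ ∑ i, g i * (ε / 4 * z i ^ 2) + ∑ i, g i - 6 * (Fintype.card ι * c) * g i₁ := by linarith
    _ = ∑ i, (g i * (ε / 4 * z i ^ 2 + 1) - 6 * c * g i₁) := by
        simp only [mul_add, mul_one, Finset.sum_sub_distrib, Finset.sum_add_distrib,
          Finset.sum_const, Finset.card_univ, nsmul_eq_mul]
        ring
    _ ≤ ∑ i, (J.indicator (fun i => g i * t i) i + g i * Q i) :=
        Finset.sum_le_sum fun i _ => absorb_pointwise hg hε hc hgain hloss hJ (by linarith) i
    _ ≤ R := by rwa [Finset.sum_add_distrib]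

theorem le_mul_pow_succ_of_mul_add_le {X g₁ G C N : ℝ} {k : ℕ} (hN : 0 < N) (hC : 0 < C)
    (hX : 0 ≤ X) (hG : 0 ≤ G) (h : X * g₁ + G ≤ C) (hg₁ : 1 / (N * C ^ k) ≤ g₁) :
    X ≤ N * C ^ (k + 1) := by
  have hX_le : X * (1 / (N * C ^ k)) ≤ C := by
    linarith [mul_le_mul_of_nonneg_left hg₁ hX]
  rw [mul_one_div, div_le_iff₀ (by positivity)] at hX_le
  exact hX_le.trans_eq (by ring)

end Absorption

namespace EstimateData

variable {E : Type*} [NormedAddCommGroup E] [InnerProductSpace ℝ E] {S : EstimateData} {δ : ℝ}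
  {c : E} {u : E → ℝ} {x v : E} {l : ℝ}

/-- The test function whose parameters are prescribed by the data. -/
def test (S : EstimateData) (δ : ℝ) (c : E) : PogorelovTest E where
  β := S.β
  m := S.m
  ε := S.ε
  B := S.B
  δ := δ
  center := c

variable [CompleteSpace E]

/-- The bounds on the depth, the gradient and the position available at a maximum of the test
function. -/
structure Admits (S : EstimateData) (δ : ℝ) (c : E) (u : E → ℝ) (x : E) : Prop where
  depth_pos : 0 < (S.test δ c).depth u x
  depth_le : (S.test δ c).depth u x ≤ S.M
  gradient_le : (S.test δ c).depth u x ^ S.a * ‖gradient u x‖ ≤ S.K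
  norm_sub_le : ‖x - c‖ ≤ S.d

namespace Admits

theorem gradient_sq_le (h : S.Admits δ c u x) :
    (S.test δ c).depth u x ^ (2 * S.a) * ‖gradient u x‖ ^ 2 ≤ S.K ^ 2 := by
  have := h.depth_pos
  calc _ = ((S.test δ c).depth u x ^ S.a * ‖gradient u x‖) ^ 2 := by ring
    _ ≤ S.K ^ 2 := pow_le_pow_left₀ (by positivity) h.gradient_le 2

theorem bounds (h : S.Admits δ c u x) (hv : ‖v‖ = 1) :
    S.Bounds ((S.test δ c).depth u x ^ (2 * S.a + 2)) (fderiv ℝ u x v / (S.test δ c).depth u x)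
      ((S.test δ c).depth u x ^ (2 * S.a) * ‖gradient u x‖ ^ 2) (inner ℝ (x - c) v) where
  W_pos := by have := h.depth_pos; positivity
  W_le := pow_le_pow_left₀ h.depth_pos.le h.depth_le _
  mul_sq_le := by
    have hw := h.depth_pos
    have hgrad : |fderiv ℝ u x v| ≤ ‖gradient u x‖ := by
      rw [← InnerProductSpace.toDual_symm_apply]
      simpa [hv] using abs_real_inner_le_norm (gradient u x) v
    calc _ = (S.test δ c).depth u x ^ (2 * S.a) * |fderiv ℝ u x v| ^ 2 := by
          rw [sq_abs]
          field_simp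
          ring
      _ ≤ _ := by gcongr
  ρ_le := h.gradient_sq_le
  sq_le := by
    rw [sq_le_sq]
    calc |inner ℝ (x - c) v| ≤ ‖x - c‖ * ‖v‖ := abs_real_inner_le_norm _ _
      _ ≤ |S.d| := by rw [hv, mul_one]; exact h.norm_sub_le.trans (le_abs_self _)

theorem slope_eq (h : S.Admits δ c u x) :
    let w := (S.test δ c).depth u x
    (S.test δ c).slope u x v l = S.ε * (w ^ (2 * S.a + 2) * (fderiv ℝ u x v / w))
      * (2 * (w ^ (2 * S.a + 1) * l) - S.m * (w ^ (2 * S.a) * ‖gradient u x‖ ^ 2))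
        + S.B * inner ℝ (x - c) v := by
  intro w
  have hu : fderiv ℝ u x v = fderiv ℝ u x v / w * w := (div_mul_cancel₀ _ h.depth_pos.ne').symm
  change S.ε * (2 * w ^ (4 * S.a + 2) * (l * fderiv ℝ u x v)
    - S.m * w ^ (4 * S.a + 1) * (fderiv ℝ u x v * ‖gradient u x‖ ^ 2))
    + S.B * inner ℝ (x - c) v = _
  linear_combination (2 * S.ε * w ^ (4 * S.a + 2) * l
    - S.ε * S.m * w ^ (4 * S.a + 1) * ‖gradient u x‖ ^ 2) * hu

theorem curvature_eq (h : S.Admits δ c u x) :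
    let w := (S.test δ c).depth u x
    (S.test δ c).curvature u x v l = S.ε * (2 * (w ^ (2 * S.a + 1) * l) ^ 2
      - 4 * S.m * w ^ (2 * S.a + 2) * (fderiv ℝ u x v / w) ^ 2 * (w ^ (2 * S.a + 1) * l))
        + S.B := by
  intro w
  have hw : w ≠ 0 := h.depth_pos.ne'
  change S.ε * (2 * w ^ (4 * S.a + 2) * l ^ 2
    - 4 * S.m * w ^ (4 * S.a + 1) * fderiv ℝ u x v ^ 2 * l) + S.B = _
  field_simp
  ring

theorem mul_gradient_sq_le (h : S.Admits δ c u x) :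
    let w := (S.test δ c).depth u x
    S.ε * (w ^ (2 * S.a + 2) * (w ^ (2 * S.a) * ‖gradient u x‖ ^ 2)) ≤ 1 / 96 := by
  intro w
  have hw := h.depth_pos
  have hM := S.M_pos
  rw [← S.ε_mul_gradBound]
  exact mul_le_mul_of_nonneg_left (mul_le_mul (pow_le_pow_left₀ hw.le h.depth_le _)
    h.gradient_sq_le (by positivity) (by positivity)) S.ε_pos.le

theorem exponent_le (h : S.Admits δ c u x) :
    (S.test δ c).exponent u x ≤ 1 / 96 + S.B / 2 * S.d ^ 2 := by
  have hB := S.B_nonneg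
  have hcenter : ‖x - c‖ ^ 2 ≤ S.d ^ 2 := pow_le_pow_left₀ (norm_nonneg _) h.norm_sub_le 2
  change S.ε * ((S.test δ c).depth u x ^ (4 * S.a + 2) * ‖gradient u x‖ ^ 2)
    + S.B / 2 * ‖x - c‖ ^ 2 ≤ _
  linear_combination h.mul_gradient_sq_le + S.B / 2 * hcenter

theorem trace_cost_le (h : S.Admits δ c u x) :
    let w := (S.test δ c).depth u x
    S.β / w + S.ε * (S.m * w ^ (S.m - 1) * ‖gradient u x‖ ^ 2) ≤ S.traceBound / w := by
  intro w
  have hw : 0 < w := h.depth_pos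
  have hM := S.one_le_M
  set q := S.ε * (w ^ (2 * S.a + 2) * (w ^ (2 * S.a) * ‖gradient u x‖ ^ 2)) with hq
  have hq_le : q ≤ 1 := h.mul_gradient_sq_le.trans (by norm_num)
  calc _ = (S.β + S.m * q) / w := by
        change _ + S.ε * (S.m * w ^ (4 * S.a + 1) * _) = _
        rw [hq]
        field_simp
        ring
    _ ≤ S.traceBound / w := by
        unfold traceBound
        gcongr
        calc (S.β + S.m * q : ℝ) ≤ S.β + S.m := by
              linear_combination (S.m : ℝ) * hq_le
          _ ≤ (S.β + S.m) * S.M := le_mul_of_one_le_right (by positivity) hM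

theorem frame_trace_le {ι : Type*} [Fintype ι] {g lam : ι → ℝ} {b : OrthonormalBasis ι ℝ E}
    {i₁ : ι} (h : S.Admits δ c u x) (hmax : IsLocalMax ((S.test δ c).value u (b i₁)) x)
    (hu : ContDiffAt ℝ 4 u x) (hframe : IsLocalMinFrame g u x b)
    (hb : IsEigenframe (D²u x) lam b) (hg : ∀ i, 0 < g i) (hsum : ∑ i, g i * lam i = 1)
    (hlam : 0 < lam i₁) :
    let w := (S.test δ c).depth u x
    (64 + 48 * Fintype.card ι) * (S.lossBound / w ^ (2 * S.a + 2))
        ≤ S.ε * (w ^ (2 * S.a + 1) * lam i₁) ^ 2 →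
      S.ε / 8 * (w ^ (2 * S.a + 1) * lam i₁) ^ 2 * g i₁ + ∑ i, g i ≤ S.traceBound / w := by
  intro w hlarge
  have hw : 0 < w := h.depth_pos
  have hr (i : ι) : D³u x (b i₁) (b i₁) (b i) / lam i₁ =
      S.β * (fderiv ℝ u x (b i) / w) - (S.test δ c).slope u x (b i) (lam i) := by
    have hfirst := (PogorelovTest.derivative_test_of_isLocalMax hmax hu S.ε_pos.le hw
      (by rwa [hb.apply_self]) (hb i) (b.norm_eq_one i)).1
    have hu3 : ContDiffAt ℝ 3 u x := hu.of_le (by norm_num)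
    rwa [hb.apply_self, D3_symm_left hu3, D3_symm_right hu3] at hfirst
  have hbounds (i : ι) := h.bounds (b.norm_eq_one i)
  refine absorb (z := fun i => w ^ (2 * S.a + 1) * lam i) (J := gainSet g lam i₁) hg S.ε_pos.le
    (by have := S.lossBound_pos; positivity)
    (fun i _ => ?_) (fun i => ?_) (fun i hi => ?_) hlarge ((add_le_add_left
      (hframe.sum_gainSet_le hu hb (hg i₁) hlam) _).trans ((PogorelovTest.sum_curvature_le hmax hu
        S.ε_pos.le hw hframe hb (fun i => (hg i).le) hsum hlam).trans h.trace_cost_le))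
  · rw [h.curvature_eq]
    exact (hbounds i).gain (by rw [hr, h.slope_eq])
  · rw [h.curvature_eq]
    exact (hbounds i).loss (by rw [hr, h.slope_eq])
  · refine (le_or_sq_le_of_notMem_gainSet hlam.le hi).imp_right fun hsq => ?_
    rw [mul_pow, mul_pow, mul_div_assoc]
    gcongr

theorem one_le_traceBound_div (h : S.Admits δ c u x) :
    1 ≤ S.traceBound / (S.test δ c).depth u x := by
  have hβ := S.six_le_β
  rw [one_le_div h.depth_pos, traceBound]
  exact h.depth_le.trans
    (le_mul_of_one_le_left S.M_pos.le (by linarith [(Nat.cast_nonneg S.m : (0 : ℝ) ≤ S.m)]))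

end Admits

theorem pow_mul_le_eigenBound {n : ℕ} {w : ℝ} (hw : 0 < w) (hwM : w ≤ S.M)
    (hz : S.ε * (w ^ (2 * S.a + 1) * l) ^ 2 ≤ (64 + 48 * n) * (S.lossBound / w ^ (2 * S.a + 2))
      + 8 * S.N * (S.traceBound / w) ^ (S.k + 1)) :
    w ^ S.β * l ≤ S.eigenBound n := by
  have hε := S.ε_pos
  have hL := S.lossBound_pos
  have hN := S.N_pos
  have hD := S.traceBound_nonneg
  have hpow {p : ℕ} (hp : S.m + p ≤ 2 * S.β) : w ^ (2 * S.β - S.m) / w ^ p ≤ S.M ^ (2 * S.β) := by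
    calc w ^ (2 * S.β - S.m) / w ^ p = w ^ (2 * S.β - S.m - p) := by
          rw [div_eq_iff (by positivity), ← pow_add]
          congr 1
          omega
      _ ≤ S.M ^ (2 * S.β - S.m - p) := pow_le_pow_left₀ hw.le hwM _
      _ ≤ S.M ^ (2 * S.β) := pow_le_pow_right₀ S.one_le_M (by omega)
  refine Real.le_sqrt_of_sq_le ?_
  rw [mul_div_assoc', le_div_iff₀ hε]
  calc (w ^ S.β * l) ^ 2 * S.ε
      = w ^ (2 * S.β - S.m) * (S.ε * (w ^ (2 * S.a + 1) * l) ^ 2) := by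
        have hsplit : w ^ (2 * S.β) = w ^ (2 * S.β - S.m) * w ^ (4 * S.a + 2) := by
          rw [← pow_add]
          congr 1
          unfold β m
          omega
        rw [mul_pow, ← pow_mul, mul_comm S.β 2, hsplit]
        ring
    _ ≤ w ^ (2 * S.β - S.m) * ((64 + 48 * n) * (S.lossBound / w ^ (2 * S.a + 2))
          + 8 * S.N * (S.traceBound / w) ^ (S.k + 1)) := by gcongr
    _ = w ^ (2 * S.β - S.m) / w ^ (2 * S.a + 2) * ((64 + 48 * n) * S.lossBound)
          + w ^ (2 * S.β - S.m) / w ^ (S.k + 1) * (8 * S.N * S.traceBound ^ (S.k + 1)) := by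
        rw [div_pow]
        ring
    _ ≤ S.M ^ (2 * S.β) * ((64 + 48 * n) * S.lossBound)
          + S.M ^ (2 * S.β) * (8 * S.N * S.traceBound ^ (S.k + 1)) := by
        gcongr ?_ * _ + ?_ * _
        · exact hpow (by unfold β; omega)
        · exact hpow (by unfold β; omega)
    _ = _ := by ring

theorem Admits.pow_mul_eigenvalue_le {ι : Type*} [Fintype ι] {g lam : ι → ℝ}
    {b : OrthonormalBasis ι ℝ E} {i₁ : ι} (h : S.Admits δ c u x)
    (hmax : IsLocalMax ((S.test δ c).value u (b i₁)) x)
    (hu : ContDiffAt ℝ 4 u x) (hframe : IsLocalMinFrame g u x b)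
    (hb : IsEigenframe (D²u x) lam b) (hg : ∀ i, 0 < g i) (hsum : ∑ i, g i * lam i = 1)
    (hlam : 0 < lam i₁)
    (hN : ∀ C : ℝ, 1 ≤ C → ∑ i, g i ≤ C → 1 / (S.N * C ^ S.k) ≤ g i₁) :
    (S.test δ c).depth u x ^ S.β * lam i₁ ≤ S.eigenBound (Fintype.card ι) := by
  have hw := h.depth_pos
  have hε := S.ε_pos
  have hloss := S.lossBound_pos
  have hC := h.one_le_traceBound_div
  set w := (S.test δ c).depth u x
  have hC_pow : 0 ≤ 8 * S.N * (S.traceBound / w) ^ (S.k + 1) := by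
    have := S.N_pos
    positivity
  refine pow_mul_le_eigenBound hw h.depth_le ?_
  rcases le_total ((64 + 48 * Fintype.card ι) * (S.lossBound / w ^ (2 * S.a + 2)))
    (S.ε * (w ^ (2 * S.a + 1) * lam i₁) ^ 2) with hlarge | hsmall
  · have htrace := h.frame_trace_le hmax hu hframe hb hg hsum hlam hlarge
    have hG : 0 ≤ ∑ i, g i := Finset.sum_nonneg fun i _ => (hg i).le
    have hX : 0 ≤ S.ε / 8 * (w ^ (2 * S.a + 1) * lam i₁) ^ 2 := by positivity
    have hz := le_mul_pow_succ_of_mul_add_le S.N_pos (by positivity) hX hG htrace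
      (hN _ hC (by linarith [mul_nonneg hX (hg i₁).le]))
    have : 0 ≤ (64 + 48 * Fintype.card ι) * (S.lossBound / w ^ (2 * S.a + 2)) := by positivity
    linarith
  · linarith

end EstimateData

section DirichletProblem

variable {n : ℕ} {Γ : Set (Fin n → ℝ)} {f : (Fin n → ℝ) → ℝ}
  {Ω : Set (EuclideanSpace ℝ (Fin n))} {u : EuclideanSpace ℝ (Fin n) → ℝ}
  {x y e : EuclideanSpace ℝ (Fin n)} {δ : ℝ}

/-- `u` is an admissible solution of `F(D²u) = 1` in the bounded open set `Ω`, of class `C⁴`,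
continuous up to the boundary and vanishing there. -/
structure IsDirichletSolution (Γ : Set (Fin n → ℝ)) (f : (Fin n → ℝ) → ℝ)
    (Ω : Set (EuclideanSpace ℝ (Fin n))) (u : EuclideanSpace ℝ (Fin n) → ℝ) : Prop where
  isOpen : IsOpen Ω
  isBounded : Bornology.IsBounded Ω
  contDiffOn : ContDiffOn ℝ 4 u Ω
  continuousOn : ContinuousOn u (closure Ω)
  hessEigen_mem : ∀ x ∈ Ω, hessEigen u x ∈ Γ
  apply_hessEigen : ∀ x ∈ Ω, f (hessEigen u x) = 1
  eq_zero : ∀ x ∈ frontier Ω, u x = 0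

theorem IsConvexInvariantCone.not_isLocalMax (hΓ : IsConvexInvariantCone Γ)
    (hu : ContDiffAt ℝ 2 u x) (hx : hessEigen u x ∈ Γ) : ¬IsLocalMax u x := by
  intro hmax
  obtain ⟨b, hb⟩ := exists_isEigenframe_hessEigen hu
  refine (hΓ.sum_pos hx).not_ge (Finset.sum_nonpos fun i _ => ?_)
  rw [← hb.apply_self]
  refine ((hasTwoJetAt_comp_line hu (b i)).of_isLocalMax ?_).2
  filter_upwards [(tendsto_line x (b i)).eventually hmax] with t ht
  simpa using ht

namespace IsDirichletSolution

theorem contDiffAt (h : IsDirichletSolution Γ f Ω u) (hx : x ∈ Ω) : ContDiffAt ℝ 4 u x :=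
  h.contDiffOn.contDiffAt (h.isOpen.mem_nhds hx)

-- By homogeneity the frame trace equals `f = 1` at `x`; by concavity and the Schur-Horn theorem
-- it is at least `f = 1` at every point and in every frame.
theorem isLocalMinFrame (h : IsDirichletSolution Γ f Ω u) (hΓ : IsConvexInvariantCone Γ)
    (hf : IsConcaveEllipticHessianOp Γ f) (hx : x ∈ Ω)
    {b : OrthonormalBasis (Fin n) ℝ (EuclideanSpace ℝ (Fin n))}
    (hb : IsEigenframe (D²u x) (hessEigen u x) b) :
    IsLocalMinFrame (fun i => fpd f i (hessEigen u x)) u x b := by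
  filter_upwards [h.isOpen.mem_nhds hx] with y hy e
  obtain ⟨b', hb'⟩ := exists_isEigenframe_hessEigen ((h.contDiffAt hy).of_le (by norm_num))
  calc weightedTrace (fun i => fpd f i (hessEigen u x)) (D²u x) b
      = ∑ i, fpd f i (hessEigen u x) * hessEigen u x i := by
        simp only [weightedTrace, hb.apply_self]
    _ = f (hessEigen u y) := by
        rw [hf.sum_fpd_mul_self hΓ.1 (h.hessEigen_mem x hx), h.apply_hessEigen x hx,
          h.apply_hessEigen y hy]
    _ ≤ _ := hf.le_weightedTrace_fpd hΓ (h.hessEigen_mem x hx) (h.hessEigen_mem y hy) hb' e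

theorem nonpos (h : IsDirichletSolution Γ f Ω u) (hΓ : IsConvexInvariantCone Γ) (hx : x ∈ Ω) :
    u x ≤ 0 := by
  obtain ⟨z, hz, hmax⟩ :=
    h.isBounded.isCompact_closure.exists_isMaxOn ⟨x, subset_closure hx⟩ h.continuousOn
  refine (hmax (subset_closure hx)).trans ?_
  by_cases hzΩ : z ∈ Ω
  · exact absurd ((hmax.on_subset subset_closure).isLocalMax (h.isOpen.mem_nhds hzΩ))
      (hΓ.not_isLocalMax ((h.contDiffAt hzΩ).of_le (by norm_num)) (h.hessEigen_mem z hzΩ))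
  · exact (h.eq_zero z (h.isOpen.frontier_eq ▸ ⟨hz, hzΩ⟩)).le

theorem sublevel_subset (h : IsDirichletSolution Γ f Ω u) (hδ : 0 < δ) :
    closure Ω ∩ u ⁻¹' Iic (-δ) ⊆ Ω := by
  rintro z ⟨hz, hzδ⟩
  by_contra hzΩ
  have := h.eq_zero z (h.isOpen.frontier_eq ▸ ⟨hz, hzΩ⟩)
  linarith [mem_Iic.1 (mem_preimage.1 hzδ)]

theorem isCompact_sublevel (h : IsDirichletSolution Γ f Ω u) (δ : ℝ) :
    IsCompact (closure Ω ∩ u ⁻¹' Iic (-δ)) :=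
  h.isBounded.isCompact_closure.of_isClosed_subset
    (h.continuousOn.preimage_isClosed_of_isClosed isClosed_closure isClosed_Iic) inter_subset_left

theorem exists_isLocalMax_value {T : PogorelovTest (EuclideanSpace ℝ (Fin n))}
    (h : IsDirichletSolution Γ f Ω u) (hΓ : IsConvexInvariantCone Γ) (hβ : T.β ≠ 0)
    (hδ : 0 < T.δ) (hy : y ∈ Ω) (hdepth : 0 < T.depth u y) (he : ‖e‖ = 1)
    (hvalue : 0 < T.value u e y) :
    ∃ x ∈ Ω, ∃ b : OrthonormalBasis (Fin n) ℝ (EuclideanSpace ℝ (Fin n)), ∃ i₁,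
      IsEigenframe (D²u x) (hessEigen u x) b ∧ 0 < T.depth u x ∧ 0 < hessEigen u x i₁ ∧
      IsLocalMax (T.value u (b i₁)) x ∧ T.value u e y ≤ T.value u (b i₁) x := by
  have mem_sublevel {z : EuclideanSpace ℝ (Fin n)} (hz : z ∈ Ω) (hdepth : 0 < T.depth u z) :
      z ∈ closure Ω ∩ u ⁻¹' Iic (-T.δ) := by
    refine ⟨subset_closure hz, ?_⟩
    unfold PogorelovTest.depth at hdepth
    simp only [mem_preimage, mem_Iic]
    linarith
  have hu {z : EuclideanSpace ℝ (Fin n)} (hz : z ∈ Ω) : ContDiffAt ℝ 2 u z :=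
    (h.contDiffAt hz).of_le (by norm_num)
  obtain ⟨x, hx_mem, e₀, he₀, hmax⟩ := PogorelovTest.exists_value_le (T := T)
    (h.isCompact_sublevel T.δ) (fun z hz => hu (h.sublevel_subset hδ hz))
    (mem_sublevel hy hdepth) he
  have hx := h.sublevel_subset hδ hx_mem
  have hle := hmax y (mem_sublevel hy hdepth) e he
  have hdepth_nonneg : 0 ≤ T.depth u x := by
    unfold PogorelovTest.depth
    linarith [mem_Iic.1 (mem_preimage.1 hx_mem.2)]
  obtain ⟨b, hb⟩ := exists_isEigenframe_hessEigen (hu hx)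
  have : Nonempty (Fin n) := Finset.univ_nonempty_iff.1
    (Finset.nonempty_of_sum_ne_zero (hΓ.sum_pos (h.hessEigen_mem x hx)).ne')
  obtain ⟨i₁, hi₁⟩ := Finite.exists_max (hessEigen u x)
  have htop := PogorelovTest.value_le_of_isEigenframe hb hi₁ he₀ hdepth_nonneg
  obtain ⟨hdepth_x, hpos⟩ :=
    PogorelovTest.pos_of_value_pos hβ hdepth_nonneg ((hvalue.trans_le hle).trans_le htop)
  refine ⟨x, hx, b, i₁, hb, hdepth_x, by rwa [hb.apply_self] at hpos, ?_, hle.trans htop⟩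
  have hdepth_near : ∀ᶠ z in 𝓝 x, 0 < T.depth u z :=
    ((hu hx).continuousAt.neg.sub continuousAt_const).eventually (lt_mem_nhds hdepth_x)
  filter_upwards [h.isOpen.mem_nhds hx, hdepth_near] with z hz hdepth_z
  exact (hmax z (mem_sublevel hz hdepth_z) (b i₁) (b.norm_eq_one i₁)).trans htop

end IsDirichletSolution

namespace EstimateData

variable {S : EstimateData}

/-- The hypotheses of the estimate, in terms of the data `S`. For `C ≥ 1` the exponent in
condition N may be rounded up to an integer. -/
structure Controls (S : EstimateData) (Γ : Set (Fin n → ℝ)) (f : (Fin n → ℝ) → ℝ)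
    (Ω : Set (EuclideanSpace ℝ (Fin n))) (u : EuclideanSpace ℝ (Fin n) → ℝ) : Prop where
  neg_le : ∀ x ∈ Ω, -u x ≤ S.M
  gradient_le : ∀ x ∈ Ω, u x < 0 → (-u x) ^ S.a * ‖gradient u x‖ ≤ S.K
  diam_le : Metric.diam Ω ≤ S.d
  one_div_le_fpd : ∀ lam ∈ Γ, f lam = 1 → ∀ C : ℝ, 1 ≤ C → ∑ i, fpd f i lam ≤ C →
    ∀ i, 1 / (S.N * C ^ S.k) ≤ fpd f i lam

/-- The bound for `w^β D²u(e,e)` in dimension `n`. -/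
def hessianBound (S : EstimateData) (n : ℕ) : ℝ :=
  S.eigenBound n * Real.exp (1 / 96 + S.B / 2 * S.d ^ 2)

theorem hessianBound_nonneg (S : EstimateData) (n : ℕ) : 0 ≤ S.hessianBound n :=
  mul_nonneg (Real.sqrt_nonneg _) (Real.exp_pos _).le

namespace Controls

theorem admits (hS : S.Controls Γ f Ω u) (h : IsDirichletSolution Γ f Ω u) (hδ : 0 < δ)
    (hx : x ∈ Ω) (hy : y ∈ Ω) (hdepth : 0 < (S.test δ y).depth u x) : S.Admits δ y u x where
  depth_pos := hdepth
  depth_le := (sub_le_self _ hδ.le).trans (hS.neg_le x hx)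
  gradient_le := by
    have hdepth_le : (S.test δ y).depth u x ≤ -u x := sub_le_self _ hδ.le
    refine le_trans ?_ (hS.gradient_le x hx (by linarith))
    gcongr
  norm_sub_le := by
    rw [← dist_eq_norm]
    exact (Metric.dist_le_diam_of_mem h.isBounded hx hy).trans hS.diam_le

theorem depth_pow_mul_hessian_le (hS : S.Controls Γ f Ω u) (h : IsDirichletSolution Γ f Ω u)
    (hΓ : IsConvexInvariantCone Γ) (hf : IsConcaveEllipticHessianOp Γ f) (hδ : 0 < δ)
    (hy : y ∈ Ω) (hdepth : 0 < -u y - δ) (he : ‖e‖ = 1) :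
    (-u y - δ) ^ S.β * D²u y e e ≤ S.hessianBound n := by
  have hε := S.ε_pos
  have hB := S.B_nonneg
  rcases le_or_gt (D²u y e e) 0 with hneg | hpos
  · exact (mul_nonpos_of_nonneg_of_nonpos (by positivity) hneg).trans (S.hessianBound_nonneg n)
  have hvalue : 0 < (S.test δ y).value u e y :=
    mul_pos (mul_pos (pow_pos hdepth _) hpos) (Real.exp_pos _)
  obtain ⟨x, hx, b, i₁, hb, hdepth_x, hlam, hmax, hle⟩ := h.exists_isLocalMax_value
    (T := S.test δ y) hΓ S.β_ne_zero hδ hy hdepth he hvalue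
  have hadmits := hS.admits h hδ hx hy hdepth_x
  have hmem := h.hessEigen_mem x hx
  have hone := h.apply_hessEigen x hx
  have heigen := hadmits.pow_mul_eigenvalue_le hmax (h.contDiffAt hx)
    (h.isLocalMinFrame hΓ hf hx hb) hb (hf.2.2.2.1 _ hmem)
    ((hf.sum_fpd_mul_self hΓ.1 hmem).trans hone) hlam
    (fun C hC hsum => hS.one_div_le_fpd _ hmem hone C hC hsum i₁)
  rw [Fintype.card_fin] at heigen
  calc (-u y - δ) ^ S.β * D²u y e e ≤ (S.test δ y).value u e y :=
        le_mul_of_one_le_right (by positivity) (Real.one_le_exp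
          (PogorelovTest.exponent_nonneg_of_depth_nonneg hε.le hB hdepth.le))
    _ ≤ (S.test δ y).value u (b i₁) x := hle
    _ ≤ S.hessianBound n := by
        rw [PogorelovTest.value, hb.apply_self]
        exact mul_le_mul heigen (Real.exp_le_exp.2 hadmits.exponent_le) (Real.exp_pos _).le
          (Real.sqrt_nonneg _)

theorem pow_mul_hessian_le (hS : S.Controls Γ f Ω u) (h : IsDirichletSolution Γ f Ω u)
    (hΓ : IsConvexInvariantCone Γ) (hf : IsConcaveEllipticHessianOp Γ f) (hx : x ∈ Ω)
    (hux : u x < 0) (he : ‖e‖ = 1) :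
    (-u x) ^ S.β * D²u x e e ≤ S.hessianBound n := by
  have hlim : Tendsto (fun δ : ℝ => (-u x - δ) ^ S.β * D²u x e e) (𝓝[>] 0)
      (𝓝 ((-u x - 0) ^ S.β * D²u x e e)) :=
    tendsto_nhdsWithin_of_tendsto_nhds (Continuous.tendsto (by fun_prop) 0)
  rw [sub_zero] at hlim
  refine le_of_tendsto hlim ?_
  filter_upwards [Ioo_mem_nhdsGT (neg_pos.2 hux)] with δ hδ
  exact hS.depth_pow_mul_hessian_le h hΓ hf hδ.1 hx (sub_pos.2 hδ.2) he

theorem pow_mul_norm_le (hS : S.Controls Γ f Ω u) (h : IsDirichletSolution Γ f Ω u)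
    (hΓ : IsConvexInvariantCone Γ) (hf : IsConcaveEllipticHessianOp Γ f) (hx : x ∈ Ω) :
    (-u x) ^ S.β * ‖iteratedFDeriv ℝ 2 u x‖ ≤ n * S.hessianBound n := by
  have hC := S.hessianBound_nonneg n
  rcases (h.nonpos hΓ hx).lt_or_eq with hneg | hzero
  · have hpow : 0 < (-u x) ^ S.β := pow_pos (neg_pos.2 hneg) _
    obtain ⟨b, hb⟩ := exists_isEigenframe_hessEigen ((h.contDiffAt hx).of_le (by norm_num))
    have hnorm : ‖D²u x‖ ≤ n * (S.hessianBound n / (-u x) ^ S.β) := by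
      simpa using hb.opNorm_le_card_mul (by positivity) (fun i => (le_div_iff₀' hpow).2
        (hb.apply_self i ▸ hS.pow_mul_hessian_le h hΓ hf hx hneg (b.norm_eq_one i)))
        (hΓ.sum_pos (h.hessEigen_mem x hx)).le
    rw [← norm_iteratedFDeriv_fderiv, norm_iteratedFDeriv_one]
    calc _ ≤ (-u x) ^ S.β * (n * (S.hessianBound n / (-u x) ^ S.β)) := by gcongr
      _ = n * S.hessianBound n := by field_simp
  · rw [hzero, neg_zero, zero_pow S.β_ne_zero, zero_mul]
    positivity

end Controls

end EstimateData

end DirichletProblem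

theorem exists_estimateData (N₁ N₂ : ℝ) (hN₁ : 0 < N₁) (M K : ℝ) (hK : 0 < K) (α d : ℝ) :
    ∃ S : EstimateData, ∀ (n : ℕ) (Γ : Set (Fin n → ℝ)) (f : (Fin n → ℝ) → ℝ)
      (Ω : Set (EuclideanSpace ℝ (Fin n))) (u : EuclideanSpace ℝ (Fin n) → ℝ),
      ConditionN Γ f N₁ N₂ → Metric.diam Ω ≤ d → (∀ x ∈ Ω, |u x| ≤ M) →
      (∀ x ∈ Ω, (-u x) ^ α * ‖gradient u x‖ ≤ K) → S.Controls Γ f Ω u := by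
  obtain ⟨a, ha⟩ := exists_nat_ge α
  obtain ⟨k, hk⟩ := exists_nat_ge N₂
  have : 0 < max M 1 := lt_max_of_lt_right one_pos
  refine ⟨⟨a, k, max M 1, max M 1 ^ (a - α) * K, d, N₁, le_max_right _ _, by positivity, hN₁⟩,
    fun n Γ f Ω u hN hd hu hgrad => ?_⟩
  have hneg_le (x) (hx : x ∈ Ω) : -u x ≤ max M 1 :=
    (neg_le_abs _).trans ((hu x hx).trans (le_max_left _ _))
  refine ⟨hneg_le, fun x hx hux => ?_, hd, fun lam hlam hone C hC hsum i => ?_⟩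
  · have hux_pos : 0 < -u x := neg_pos.2 hux
    have hpow : (-u x) ^ (a - α) ≤ max M 1 ^ (a - α) :=
      Real.rpow_le_rpow hux_pos.le (hneg_le x hx) (sub_nonneg.2 ha)
    calc (-u x) ^ a * ‖gradient u x‖
        = (-u x) ^ (a - α) * ((-u x) ^ α * ‖gradient u x‖) := by
          rw [← mul_assoc, ← Real.rpow_add hux_pos, sub_add_cancel, Real.rpow_natCast]
      _ ≤ max M 1 ^ (a - α) * K := by
          gcongr
          exact hgrad x hx
  · refine le_trans ?_ (hN lam hlam hone C (one_pos.trans_le hC) hsum i)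
    have hpow : C ^ N₂ ≤ C ^ k := by
      rw [← Real.rpow_natCast]
      exact Real.rpow_le_rpow_of_exponent_le hC hk
    gcongr

theorem c2_estimate_general (n : ℕ) (N₁ N₂ : ℝ) (hN₁ : 0 < N₁) (M K : ℝ) (hK : 0 < K) (α d : ℝ) :
    ∃ β C : ℝ, 0 < β ∧ 0 < C ∧
      ∀ (Γ : Set (Fin n → ℝ)) (f : (Fin n → ℝ) → ℝ),
        IsConvexInvariantCone Γ → IsConcaveEllipticHessianOp Γ f → ConditionN Γ f N₁ N₂ →
        ∀ (Ω : Set (EuclideanSpace ℝ (Fin n))) (u : EuclideanSpace ℝ (Fin n) → ℝ),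
          IsDirichletSolution Γ f Ω u → Metric.diam Ω ≤ d → (∀ x ∈ Ω, |u x| ≤ M) →
          (∀ x ∈ Ω, (-u x) ^ α * ‖gradient u x‖ ≤ K) →
          ∀ x ∈ Ω, (-u x) ^ β * ‖iteratedFDeriv ℝ 2 u x‖ ≤ C := by
  obtain ⟨S, hS⟩ := exists_estimateData N₁ N₂ hN₁ M K hK α d
  have hβ : (0 : ℝ) < S.β := by exact_mod_cast S.β_ne_zero.bot_lt
  have hC := S.hessianBound_nonneg n
  refine ⟨S.β, n * S.hessianBound n + 1, hβ, by positivity,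
    fun Γ f hΓ hf hN Ω u h hd hu hgrad x hx => ?_⟩
  rw [Real.rpow_natCast]
  exact ((hS n Γ f Ω u hN hd hu hgrad).pow_mul_norm_le h hΓ hf hx).trans (by linarith)

/-- **Proposition (`C²` estimate).** For a concave elliptic Hessian operator satisfying
condition N with constants `N₁, N₂` and a solution `u` of `F(D²u) = 1` in `Ω`, `u = 0` on
`∂Ω`, satisfying the interior gradient bound `sup_Ω ((−u)^α |Du|) ≤ K`, one has
`sup_Ω ((−u)^β |D²u|) ≤ C` with `β, C` depending only on `‖u‖_{C⁰(Ω)}`, `K`, `α`,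
`N₁, N₂` and `diam(Ω)` — no condition D is needed. -/
theorem c2_estimate (n : ℕ) (hn : 2 ≤ n)
    (N₁ N₂ : ℝ) (hN₁ : 0 < N₁) (hN₂ : 0 < N₂)
    (M : ℝ) (hM : 0 < M) (K : ℝ) (hK : 0 < K) (α : ℝ) (hα : 0 < α)
    (d : ℝ) (hd : 0 < d) :
    ∃ β C : ℝ, 0 < β ∧ 0 < C ∧
      ∀ (Γ : Set (Fin n → ℝ)) (f : (Fin n → ℝ) → ℝ),
        IsConvexInvariantCone Γ → IsConcaveEllipticHessianOp Γ f → ConditionN Γ f N₁ N₂ →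
        ∀ (Ω : Set (EuclideanSpace ℝ (Fin n))) (u : EuclideanSpace ℝ (Fin n) → ℝ),
          IsOpen Ω → IsConnected Ω → Bornology.IsBounded Ω → Metric.diam Ω ≤ d →
          ContDiffOn ℝ (⊤ : ℕ∞) u Ω → ContinuousOn u (closure Ω) →
          (∀ x ∈ closure Ω, |u x| ≤ M) →
          (∀ x ∈ Ω, hessEigen u x ∈ Γ) →
          (∀ x ∈ Ω, f (hessEigen u x) = 1) →
          (∀ x ∈ frontier Ω, u x = 0) →
          (∀ x ∈ Ω, (-u x) ^ α * ‖gradient u x‖ ≤ K) →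
          ∀ x ∈ Ω, (-u x) ^ β * ‖iteratedFDeriv ℝ 2 u x‖ ≤ C := by
  obtain ⟨β, C, hβ, hC, hest⟩ := c2_estimate_general n N₁ N₂ hN₁ M K hK α d
  exact ⟨β, C, hβ, hC, fun Γ f hΓ hf hN Ω u hΩ _ hbd hdiam hu hcont huM hmem hone hzero =>
    hest Γ f hΓ hf hN Ω u ⟨hΩ, hbd, contDiffOn_infty.1 hu 4, hcont, hmem, hone, hzero⟩ hdiam
      fun x hx => huM x (subset_closure hx)⟩
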